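/- arXiv:1607.03084 — 2 statements merged into one kernel-verified Lean document; each statement's English description precedes it below -/
import Mathlib

section
/- Let n ≥ 1, T ≥ 10 be such that T ≥ n, let ε = 1/(1600e) and λ ∈ (0,1/2). Let p be a (1/e)-approximately log-concave probability measure supported on a convex body 𝒦 ⊂ ℝⁿ of diameter at most T, with mean μ(p) and covariance matrix Cov(p), and let c[p] be the Gaussian measure N(μ(p), (ε²/(n·log T))·(λ/(2−λ))·Cov(p)). Let f : ℝⁿ → [0,∞) be a convex, T-Lipschitz function with f(x) ∈ [0,1] for all x ∈ 𝒦. Then ∫ f dc[p] ≤ E_{C∼c[p], X∼p independent}[ f((1−λ)C + λX) ] + 1/T². -/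
open MeasureTheory ProbabilityTheory Real

noncomputable section

/-- A nonnegative function `g` is log-concave if it satisfies the pointwise
multiplicative concavity inequality (equivalently, `g = exp` of a concave
function, with the value `0 = exp (-∞)` allowed). -/
def IsLogConcave {E : Type*} [AddCommMonoid E] [SMul ℝ E] (g : E → ℝ) : Prop :=
  (∀ x, 0 ≤ g x) ∧
    ∀ x y : E, ∀ a b : ℝ, 0 ≤ a → 0 ≤ b → a + b = 1 →
      g x ^ a * g y ^ b ≤ g (a • x + b • y)

/-- A density `p` is `ε`-approximately log-concave if there is a log-concave
function `g` with `ε • g ≤ p ≤ (1/ε) • g` pointwise. -/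
def ApproxLogConcave {E : Type*} [AddCommMonoid E] [SMul ℝ E] (ε : ℝ) (p : E → ℝ) : Prop :=
  ∃ g : E → ℝ, IsLogConcave g ∧ ∀ x, ε * g x ≤ p x ∧ p x ≤ (1 / ε) * g x

/-- Mean (barycenter) of the probability density `p` on `ℝⁿ`. -/
def densMean (n : ℕ) (p : EuclideanSpace ℝ (Fin n) → ℝ) : EuclideanSpace ℝ (Fin n) :=
  ∫ x, p x • x

/-- Covariance matrix of the probability density `p` on `ℝⁿ`. -/
def densCov (n : ℕ) (p : EuclideanSpace ℝ (Fin n) → ℝ) : Matrix (Fin n) (Fin n) ℝ :=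
  Matrix.of fun i j => ∫ x, p x * ((x i - densMean n p i) * (x j - densMean n p j))

/-- The (Mahalanobis-type) norm `‖x‖_A = √(xᵀ A x)` associated with a matrix `A`. -/
def mahal (n : ℕ) (A : Matrix (Fin n) (Fin n) ℝ) (x : EuclideanSpace ℝ (Fin n)) : ℝ :=
  Real.sqrt (∑ i, ∑ j, x i * A i j * x j)

/-- Density of the Gaussian measure `N(μ, S)` on `ℝⁿ`. -/
def gaussPdf (n : ℕ) (μ : EuclideanSpace ℝ (Fin n)) (S : Matrix (Fin n) (Fin n) ℝ)
    (x : EuclideanSpace ℝ (Fin n)) : ℝ :=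
  (2 * π) ^ (-(n : ℝ) / 2) * S.det ^ (-(1 : ℝ) / 2) *
    Real.exp (-(1 / 2) * ∑ i, ∑ j, (x i - μ i) * S⁻¹ i j * (x j - μ j))

open scoped ENNReal NNReal

/-- One-dimensional Brunn–Minkowski inequality, for midpoints. -/
theorem Real.volume_add_volume_le_of_midpoint_mem {A B C : Set ℝ} (hA : MeasurableSet A)
    (hB : MeasurableSet B) (hA0 : A.Nonempty) (hB0 : B.Nonempty)
    (h : ∀ x ∈ A, ∀ y ∈ B, (x + y) / 2 ∈ C) :
    volume A + volume B ≤ 2 * volume C := by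
  have key : ∀ K ⊆ A, IsCompact K → ∀ L ⊆ B, IsCompact L → volume K + volume L ≤ 2 * volume C := by
    have main : ∀ K ⊆ A, IsCompact K → K.Nonempty → ∀ L ⊆ B, IsCompact L → L.Nonempty →
        volume K + volume L ≤ 2 * volume C := by
      intro K hKA hK hK0 L hLB hL hL0
      obtain ⟨a, haK, ha⟩ := hK.exists_isGreatest hK0
      obtain ⟨b, hbL, hb⟩ := hL.exists_isLeast hL0
      set K' : Set ℝ := (fun x => b + x) '' K
      set L' : Set ℝ := (fun x => a + x) '' L
      have hK' : volume K' = volume K := by simp [K']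
      have hL' : volume L' = volume L := by simp [L']
      have hdisj : AEDisjoint volume K' L' := by
        refine measure_mono_null (t := {a + b}) ?_ (by simp)
        rintro _ ⟨⟨x, hx, rfl⟩, ⟨y, hy, hxy⟩⟩
        have h1 := ha hx
        have h2 := hb hy
        simp only [Set.mem_singleton_iff] at *
        linarith
      have hL'm : NullMeasurableSet L' :=
        (hL.image (by fun_prop)).isClosed.measurableSet.nullMeasurableSet
      rw [← hK', ← hL', ← measure_union₀ hL'm hdisj]
      have hsub : K' ∪ L' ⊆ (fun x => (2 : ℝ)⁻¹ * x) ⁻¹' C := by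
        rintro _ (⟨x, hx, rfl⟩ | ⟨x, hx, rfl⟩)
        · have := h x (hKA hx) b (hLB hbL)
          simpa [Set.mem_preimage, div_eq_inv_mul, add_comm] using this
        · have := h a (hKA haK) x (hLB hx)
          simpa [Set.mem_preimage, div_eq_inv_mul, add_comm] using this
      refine (measure_mono hsub).trans_eq ?_
      rw [Real.volume_preimage_mul_left (by norm_num)]
      norm_num
    intro K hKA hK L hLB hL
    obtain ⟨x, hx⟩ := hA0
    obtain ⟨y, hy⟩ := hB0
    refine le_trans (by gcongr <;> exact Set.subset_insert _ _)
      (main (insert x K) (Set.insert_subset hx hKA) (hK.insert x) (Set.insert_nonempty _ _)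
        (insert y L) (Set.insert_subset hy hLB) (hL.insert y) (Set.insert_nonempty _ _))
  have key' : ∀ L ⊆ B, IsCompact L → volume A + volume L ≤ 2 * volume C := by
    intro L hLB hL
    have hL' : volume L ≤ 2 * volume C := by
      simpa using key ∅ (Set.empty_subset _) isCompact_empty L hLB hL
    refine add_le_of_le_tsub_right_of_le hL' ?_
    rw [hA.measure_eq_iSup_isCompact]
    refine iSup_le fun K => iSup_le fun hKA => iSup_le fun hK => ?_
    exact ENNReal.le_sub_of_add_le_right hL.measure_lt_top.ne (key K hKA hK L hLB hL)
  have hA' : volume A ≤ 2 * volume C := by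
    simpa using key' ∅ (Set.empty_subset _) isCompact_empty
  by_cases hAt : volume A = ∞
  · rw [hAt, top_le_iff] at hA'
    simp [hA']
  refine add_le_of_le_tsub_left_of_le hA' ?_
  rw [hB.measure_eq_iSup_isCompact]
  refine iSup_le fun L => iSup_le fun hLB => iSup_le fun hL => ?_
  exact ENNReal.le_sub_of_add_le_left hAt (key' L hLB hL)

theorem ENNReal.mul_le_sq_of_add_le {a b c : ℝ≥0∞} (h : a + b ≤ 2 * c) : a * b ≤ c ^ 2 := by
  by_cases hc : c = ∞
  · simp [hc]
  have hab : a + b ≠ ∞ := ne_top_of_le_ne_top (ENNReal.mul_ne_top (by simp) hc) h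
  obtain ⟨ha, hb⟩ := ENNReal.add_ne_top.1 hab
  lift a to ℝ≥0 using ha
  lift b to ℝ≥0 using hb
  lift c to ℝ≥0 using hc
  norm_cast at h ⊢
  have h' : (a : ℝ) + b ≤ 2 * c := by exact_mod_cast h
  have : (a : ℝ) * b ≤ c ^ 2 := by nlinarith [sq_nonneg ((a : ℝ) - b), a.2, b.2, c.2]
  exact_mod_cast this

/-- The one-dimensional Prékopa–Leindler inequality for functions with supremum `1`. -/
theorem lintegral_add_lintegral_le_of_midpoint_of_sup_eq_one {f g h : ℝ → ℝ}
    (hf : Measurable f) (hg : Measurable g) (hh : Measurable h)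
    (hf0 : ∀ x, 0 ≤ f x) (hg0 : ∀ x, 0 ≤ g x) (hh0 : ∀ x, 0 ≤ h x)
    (hf1 : IsLUB (Set.range f) 1) (hg1 : IsLUB (Set.range g) 1)
    (hfgh : ∀ x y, f x * g y ≤ h ((x + y) / 2) ^ 2) :
    (∫⁻ x, ENNReal.ofReal (f x)) + ∫⁻ x, ENNReal.ofReal (g x)
      ≤ 2 * ∫⁻ x, ENNReal.ofReal (h x) := by
  have anti : ∀ u : ℝ → ℝ, Measurable (fun t => volume {a | t < u a}) := fun u =>
    Antitone.measurable fun s t hst => measure_mono fun a (ha : t < u a) => hst.trans_lt ha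
  rw [lintegral_eq_lintegral_meas_lt volume (.of_forall hf0) hf.aemeasurable,
    lintegral_eq_lintegral_meas_lt volume (.of_forall hg0) hg.aemeasurable,
    lintegral_eq_lintegral_meas_lt volume (.of_forall hh0) hh.aemeasurable,
    ← lintegral_add_left (anti f), ← lintegral_const_mul _ (anti h)]
  refine setLIntegral_mono ((anti h).const_mul _) fun t (ht : 0 < t) => ?_
  rcases lt_or_ge t 1 with ht1 | ht1
  · obtain ⟨_, ⟨x, rfl⟩, hx⟩ := (lt_isLUB_iff hf1).1 ht1
    obtain ⟨_, ⟨y, rfl⟩, hy⟩ := (lt_isLUB_iff hg1).1 ht1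
    refine Real.volume_add_volume_le_of_midpoint_mem (measurableSet_lt measurable_const hf)
      (measurableSet_lt measurable_const hg) ⟨x, hx⟩ ⟨y, hy⟩ fun x hx y hy => ?_
    simp only [Set.mem_ofPred_eq] at *
    refine lt_of_pow_lt_pow_left₀ 2 (hh0 _) (lt_of_lt_of_le ?_ (hfgh x y))
    nlinarith
  · have hfe : {a | t < f a} = ∅ :=
      Set.eq_empty_of_forall_notMem fun x (hx : t < f x) =>
        absurd (hf1.1 ⟨x, rfl⟩) (not_le.2 (ht1.trans_lt hx))
    have hge : {a | t < g a} = ∅ :=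
      Set.eq_empty_of_forall_notMem fun x (hx : t < g x) =>
        absurd (hg1.1 ⟨x, rfl⟩) (not_le.2 (ht1.trans_lt hx))
    simp [hfe, hge]

theorem ENNReal.isLUB_range_toReal_div {ι : Type*} {F : ι → ℝ≥0∞} [Nonempty ι]
    (h0 : ⨆ x, F x ≠ 0) (ht : ⨆ x, F x ≠ ∞) :
    IsLUB (Set.range fun x => (F x / ⨆ x, F x).toReal) 1 := by
  have hle : ∀ x, F x / ⨆ x, F x ≤ 1 := fun x =>
    ENNReal.div_le_of_le_mul (by simpa using le_iSup F x)
  have hsup : ⨆ x, (F x / ⨆ x, F x) = 1 := by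
    rw [← ENNReal.iSup_div, ENNReal.div_self h0 ht]
  have := ENNReal.toReal_iSup (f := fun x => F x / ⨆ x, F x) fun x =>
    ne_top_of_le_ne_top ENNReal.one_ne_top (hle x)
  rw [hsup, ENNReal.toReal_one] at this
  rw [this]
  refine isLUB_ciSup ⟨1, ?_⟩
  rintro _ ⟨x, rfl⟩
  exact ENNReal.toReal_le_of_le_ofReal zero_le_one (by simpa using hle x)

theorem lintegral_mul_lintegral_le_sq_of_midpoint_of_bounded {F G H : ℝ → ℝ≥0∞}
    (hF : Measurable F) (hG : Measurable G) (hH : Measurable H)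
    (hFt : ⨆ x, F x ≠ ∞) (hGt : ⨆ x, G x ≠ ∞)
    (h : ∀ x y, F x * G y ≤ H ((x + y) / 2) ^ 2) :
    (∫⁻ x, F x) * ∫⁻ x, G x ≤ (∫⁻ x, H x) ^ 2 := by
  set A := ⨆ x, F x with hA
  set B := ⨆ x, G x with hB
  by_cases hA0 : A = 0
  · have : ∀ x, F x = 0 := fun x => le_antisymm (hA0 ▸ le_iSup F x) zero_le
    simp [this]
  by_cases hB0 : B = 0
  · have : ∀ x, G x = 0 := fun x => le_antisymm (hB0 ▸ le_iSup G x) zero_le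
    simp [this]
  obtain ⟨s, hs⟩ : ∃ s : ℝ≥0∞, s ^ 2 = A * B :=
    ⟨(A * B) ^ (1 / 2 : ℝ), by rw [← ENNReal.rpow_natCast, ← ENNReal.rpow_mul]; norm_num⟩
  have hs0 : s ≠ 0 := by rintro rfl; simp [hA0, hB0, eq_comm] at hs
  have hst : s ≠ ∞ := by rintro rfl; simp [ENNReal.mul_eq_top, hA0, hB0, hFt, hGt, eq_comm] at hs
  have hFle : ∀ x, F x / A ≤ 1 := fun x => ENNReal.div_le_of_le_mul (by simpa using le_iSup F x)
  have hGle : ∀ x, G x / B ≤ 1 := fun x => ENNReal.div_le_of_le_mul (by simpa using le_iSup G x)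
  have hofReal : ∀ z : ℝ≥0∞, z ≤ 1 → ENNReal.ofReal z.toReal = z := fun z hz =>
    ENNReal.ofReal_toReal (ne_top_of_le_ne_top ENNReal.one_ne_top hz)
  have main := lintegral_add_lintegral_le_of_midpoint_of_sup_eq_one
    (f := fun x => (F x / A).toReal) (g := fun x => (G x / B).toReal)
    (h := fun x => (min 1 (H x / s)).toReal) (by fun_prop) (by fun_prop) (by fun_prop)
    (fun _ => ENNReal.toReal_nonneg) (fun _ => ENNReal.toReal_nonneg)
    (fun _ => ENNReal.toReal_nonneg) (ENNReal.isLUB_range_toReal_div hA0 hFt)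
    (ENNReal.isLUB_range_toReal_div hB0 hGt) (by
      intro x y
      rw [← ENNReal.toReal_mul, ← ENNReal.toReal_pow]
      refine ENNReal.toReal_mono (ENNReal.pow_ne_top (by simp)) ?_
      rcases min_cases 1 (H ((x + y) / 2) / s) with ⟨h1, -⟩ | ⟨h1, -⟩
      · rw [h1]
        simpa using mul_le_mul' (hFle x) (hGle y)
      · rw [h1, div_eq_mul_inv, div_eq_mul_inv, div_eq_mul_inv, mul_pow, ← ENNReal.inv_pow, hs,
          ENNReal.mul_inv (.inl hA0) (.inl hFt), mul_mul_mul_comm]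
        gcongr
        exact h x y)
  simp only [hofReal _ (hFle _), hofReal _ (hGle _), hofReal _ (min_le_left _ _)] at main
  have main' := ENNReal.mul_le_sq_of_add_le main
  have hFi : ∫⁻ x, F x = A * ∫⁻ x, F x / A := by
    rw [← lintegral_const_mul _ (by fun_prop)]
    simp_rw [ENNReal.mul_div_cancel hA0 hFt]
  have hGi : ∫⁻ x, G x = B * ∫⁻ x, G x / B := by
    rw [← lintegral_const_mul _ (by fun_prop)]
    simp_rw [ENNReal.mul_div_cancel hB0 hGt]
  have hHi : ∫⁻ x, H x = s * ∫⁻ x, H x / s := by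
    rw [← lintegral_const_mul _ (by fun_prop)]
    simp_rw [ENNReal.mul_div_cancel hs0 hst]
  rw [hFi, hGi, hHi, mul_mul_mul_comm, mul_pow, hs]
  gcongr
  refine main'.trans ?_
  gcongr
  exact min_le_right _ _

/-- The one-dimensional Prékopa–Leindler inequality, for midpoints. -/
theorem lintegral_mul_lintegral_le_sq_of_midpoint {F G H : ℝ → ℝ≥0∞}
    (hF : Measurable F) (hG : Measurable G) (hH : Measurable H)
    (h : ∀ x y, F x * G y ≤ H ((x + y) / 2) ^ 2) :
    (∫⁻ x, F x) * ∫⁻ x, G x ≤ (∫⁻ x, H x) ^ 2 := by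
  have trunc : ∀ u : ℝ → ℝ≥0∞, Measurable u →
      ∫⁻ x, u x = ⨆ k : ℕ, ∫⁻ x, min (u x) k := by
    intro u hu
    rw [← lintegral_iSup (fun k => hu.min measurable_const)
      (fun i j hij x => min_le_min_left _ (by exact_mod_cast hij))]
    congr with x
    rw [← inf_iSup_eq, ENNReal.iSup_natCast, inf_top_eq]
  have fin : ∀ (u : ℝ → ℝ≥0∞) (k : ℕ), ⨆ x, min (u x) k ≠ ∞ := fun u k =>
    ne_top_of_le_ne_top (ENNReal.natCast_ne_top k) (iSup_le fun x => min_le_right _ _)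
  rw [trunc F hF, trunc G hG, ENNReal.iSup_mul]
  refine iSup_le fun k => ?_
  rw [ENNReal.mul_iSup]
  refine iSup_le fun l => ?_
  exact lintegral_mul_lintegral_le_sq_of_midpoint_of_bounded (hF.min measurable_const)
    (hG.min measurable_const) hH (fin F k) (fin G l) fun x y =>
      (mul_le_mul' (min_le_left _ _) (min_le_left _ _)).trans (h x y)

/-- The Prékopa–Leindler inequality on `Fin n → ℝ`, for midpoints. -/
theorem lintegral_pi_mul_lintegral_le_sq_of_midpoint (n : ℕ) {F G H : (Fin n → ℝ) → ℝ≥0∞}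
    (hF : Measurable F) (hG : Measurable G) (hH : Measurable H)
    (h : ∀ x y, F x * G y ≤ H ((2 : ℝ)⁻¹ • (x + y)) ^ 2) :
    (∫⁻ x, F x) * ∫⁻ x, G x ≤ (∫⁻ x, H x) ^ 2 := by
  induction n with
  | zero =>
    simp only [lintegral_unique, volume_pi, Measure.pi_univ, Finset.univ_eq_empty,
      Finset.prod_empty, mul_one]
    exact (h _ _).trans_eq (congrArg (fun z => H z ^ 2) (Subsingleton.elim _ _))
  | succ n ih =>
    let e := (MeasurableEquiv.piFinSuccAbove (fun _ : Fin (n + 1) => ℝ) 0).symm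
    have he : MeasurePreserving e := (volume_preserving_piFinSuccAbove (fun _ => ℝ) 0).symm
    have hsplit : ∀ u : (Fin (n + 1) → ℝ) → ℝ≥0∞, Measurable u →
        ∫⁻ x, u x = ∫⁻ t : ℝ, ∫⁻ x : Fin n → ℝ, u (e (t, x)) := by
      intro u hu
      rw [← he.lintegral_comp hu, Measure.volume_eq_prod,
        lintegral_prod (fun q => u (e q)) (hu.comp e.measurable).aemeasurable]
    have hmeas : ∀ u : (Fin (n + 1) → ℝ) → ℝ≥0∞, Measurable u →
        Measurable fun q : ℝ × (Fin n → ℝ) => u (e q) := fun u hu => hu.comp e.measurable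
    rw [hsplit F hF, hsplit G hG, hsplit H hH]
    refine lintegral_mul_lintegral_le_sq_of_midpoint (hmeas F hF).lintegral_prod_right'
      (hmeas G hG).lintegral_prod_right' (hmeas H hH).lintegral_prod_right' fun s t => ?_
    refine ih ((hmeas F hF).comp measurable_prodMk_left)
      ((hmeas G hG).comp measurable_prodMk_left) ((hmeas H hH).comp measurable_prodMk_left)
      fun x y => (h _ _).trans_eq ?_
    congr 2
    ext i
    refine Fin.cases ?_ (fun j => ?_) i
    · simp [e, MeasurableEquiv.piFinSuccAbove, div_eq_inv_mul]
    · simp [e, MeasurableEquiv.piFinSuccAbove, mul_add]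

theorem AEMeasurable.exists_measurable_ge {α : Type*} [MeasurableSpace α] {μ : Measure α}
    {f : α → ℝ≥0∞} (hf : AEMeasurable f μ) :
    ∃ g, Measurable g ∧ f ≤ g ∧ ∫⁻ x, g x ∂μ = ∫⁻ x, f x ∂μ := by
  classical
  have hnull : μ {x | ¬f x = hf.mk f x} = 0 := ae_iff.1 hf.ae_eq_mk
  set N := toMeasurable μ {x | ¬f x = hf.mk f x} with hN
  have hN0 : μ N = 0 := by rw [hN, measure_toMeasurable, hnull]
  refine ⟨N.piecewise (fun _ => ∞) (hf.mk f), Measurable.piecewise (measurableSet_toMeasurable _ _)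
    measurable_const hf.measurable_mk, fun x => ?_, lintegral_congr_ae ?_⟩
  · by_cases hx : x ∈ N
    · simp [hx]
    · have : f x = hf.mk f x := by
        by_contra hne
        exact hx (subset_toMeasurable _ _ hne)
      simp [hx, this]
  · filter_upwards [hf.ae_eq_mk, measure_eq_zero_iff_ae_notMem.1 hN0] with x hx hxN
    simp [hxN, hx]

/-- The Prékopa–Leindler inequality on Euclidean space, for midpoints. -/
theorem EuclideanSpace.lintegral_mul_lintegral_le_sq_of_midpoint {n : ℕ}
    {F G H : EuclideanSpace ℝ (Fin n) → ℝ≥0∞} (hH : AEMeasurable H)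
    (h : ∀ x y, F x * G y ≤ H ((2 : ℝ)⁻¹ • (x + y)) ^ 2) :
    (∫⁻ x, F x) * ∫⁻ x, G x ≤ (∫⁻ x, H x) ^ 2 := by
  obtain ⟨F', hF', hFF', hFi⟩ := exists_measurable_le_lintegral_eq volume F
  obtain ⟨G', hG', hGG', hGi⟩ := exists_measurable_le_lintegral_eq volume G
  obtain ⟨H', hH', hHH_le, hHi⟩ := hH.exists_measurable_ge
  have hm : Measurable (WithLp.toLp 2 : (Fin n → ℝ) → EuclideanSpace ℝ (Fin n)) := by fun_prop
  have hp := PiLp.volume_preserving_toLp (Fin n)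
  rw [hFi, hGi, ← hHi, ← hp.lintegral_comp hF', ← hp.lintegral_comp hG', ← hp.lintegral_comp hH']
  refine lintegral_pi_mul_lintegral_le_sq_of_midpoint n (hF'.comp hm) (hG'.comp hm) (hH'.comp hm)
    fun x y => ?_
  refine (mul_le_mul' (hFF' _) (hGG' _)).trans ((h _ _).trans ?_)
  exact pow_le_pow_left' (hHH_le _) 2

/-- The Prékopa–Leindler inequality for Bochner integrals of nonnegative functions. -/
theorem EuclideanSpace.integral_mul_integral_le_sq_of_midpoint {n : ℕ}
    {F G H : EuclideanSpace ℝ (Fin n) → ℝ} (hF : Integrable F) (hG : Integrable G)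
    (hH : Integrable H) (hF0 : ∀ x, 0 ≤ F x) (hG0 : ∀ x, 0 ≤ G x) (hH0 : ∀ x, 0 ≤ H x)
    (h : ∀ x y, F x * G y ≤ H ((2 : ℝ)⁻¹ • (x + y)) ^ 2) :
    (∫ x, F x) * ∫ x, G x ≤ (∫ x, H x) ^ 2 := by
  have key := EuclideanSpace.lintegral_mul_lintegral_le_sq_of_midpoint
    (F := fun x => ENNReal.ofReal (F x)) (G := fun x => ENNReal.ofReal (G x))
    (H := fun x => ENNReal.ofReal (H x)) hH.aemeasurable.ennreal_ofReal (fun x y => by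
      rw [← ENNReal.ofReal_mul (hF0 x), ← ENNReal.ofReal_pow (hH0 _)]
      exact ENNReal.ofReal_le_ofReal (h x y))
  rw [← ofReal_integral_eq_lintegral_ofReal hF (.of_forall hF0),
    ← ofReal_integral_eq_lintegral_ofReal hG (.of_forall hG0),
    ← ofReal_integral_eq_lintegral_ofReal hH (.of_forall hH0),
    ← ENNReal.ofReal_mul (integral_nonneg hF0),
    ← ENNReal.ofReal_pow (integral_nonneg hH0)] at key
  exact (ENNReal.ofReal_le_ofReal_iff (by positivity)).1 key

/-- A reverse Hölder inequality between the first two moments of a function which is controlled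
along midpoints, under a density which is midpoint log-concave up to a factor. -/
theorem integral_mul_sq_le_of_midpoint {n : ℕ} {p Z : EuclideanSpace ℝ (Fin n) → ℝ} {a : ℝ}
    (ha : 0 ≤ a) (hp0 : ∀ x, 0 ≤ p x) (hp1 : ∫ x, p x = 1)
    (hp : ∀ x y, p x * p y ≤ (a * p ((2 : ℝ)⁻¹ • (x + y))) ^ 2)
    (hZm : Measurable Z) (hZ : ∀ x y, |Z x| ≤ 2 * |Z ((2 : ℝ)⁻¹ • (x + y))| + |Z y|)
    (hi1 : Integrable fun x => p x * |Z x|) (hi2 : Integrable fun x => p x * Z x ^ 2) :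
    ∫ x, p x * Z x ^ 2 ≤ 32 * a ^ 2 * (∫ x, p x * |Z x|) ^ 2 := by
  have hpi : Integrable p := by
    by_contra hni
    simp [integral_undef hni] at hp1
  set m := ∫ x, p x * |Z x| with hm
  have hm0 : 0 ≤ m := integral_nonneg fun x => mul_nonneg (hp0 x) (abs_nonneg _)
  rcases hm0.eq_or_lt with hm0 | hm0
  · have hae := (integral_eq_zero_iff_of_nonneg
      (fun x => mul_nonneg (hp0 x) (abs_nonneg (Z x))) hi1).1 (hm.symm.trans hm0.symm)
    have : ∫ x, p x * Z x ^ 2 = 0 := by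
      refine integral_eq_zero_of_ae ?_
      filter_upwards [hae] with x hx
      rcases mul_eq_zero.1 hx with hx | hx
      · simp [hx]
      · simp [abs_eq_zero.1 hx]
    rw [this]
    positivity
  set S : Set (EuclideanSpace ℝ (Fin n)) := {x | |Z x| ≤ 2 * m}
  have hS : MeasurableSet S := measurableSet_le (by fun_prop) measurable_const
  have hGi : Integrable (S.indicator p) := hpi.indicator hS
  have hhalf : 1 / 2 ≤ ∫ x, S.indicator p x := by
    have h1 : ∫ x, (p x - (2 * m)⁻¹ * (p x * |Z x|)) = 1 / 2 := by
      rw [integral_sub hpi (hi1.const_mul _), integral_const_mul, ← hm, hp1]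
      field_simp
      norm_num
    rw [← h1]
    refine integral_mono (hpi.sub (hi1.const_mul _)) hGi fun x => ?_
    by_cases hx : x ∈ S
    · simp only [Set.indicator_of_mem hx]
      have := mul_nonneg (hp0 x) (abs_nonneg (Z x))
      have : 0 ≤ (2 * m)⁻¹ * (p x * |Z x|) := by positivity
      linarith
    · simp only [Set.indicator_of_notMem hx]
      have hx' : 2 * m < |Z x| := not_le.1 hx
      have : p x ≤ (2 * m)⁻¹ * (p x * |Z x|) := by
        rw [inv_mul_eq_div, le_div_iff₀ (by positivity)]
        exact mul_le_mul_of_nonneg_left hx'.le (hp0 x)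
      linarith
  have hHi : Integrable fun x => a * (2 * (p x * |Z x|) + 2 * m * p x) :=
    ((hi1.const_mul 2).add (hpi.const_mul (2 * m))).const_mul a
  have key := EuclideanSpace.integral_mul_integral_le_sq_of_midpoint hi2 hGi hHi
    (fun x => mul_nonneg (hp0 x) (sq_nonneg _))
    (fun x => Set.indicator_nonneg (fun x _ => hp0 x) x)
    (fun x => by
      have := hp0 x
      positivity) (by
      intro x y
      by_cases hy : y ∈ S
      · rw [Set.indicator_of_mem hy]
        set z := (2 : ℝ)⁻¹ • (x + y)
        have h1 : |Z x| ≤ 2 * |Z z| + 2 * m := (hZ x y).trans (by gcongr; exact hy)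
        calc p x * Z x ^ 2 * p y = (p x * p y) * |Z x| ^ 2 := by rw [sq_abs]; ring
          _ ≤ (a * p z) ^ 2 * (2 * |Z z| + 2 * m) ^ 2 := by
            gcongr
            exact hp x y
          _ = _ := by ring
      · rw [Set.indicator_of_notMem hy, mul_zero]
        positivity)
  have hH : ∫ x, a * (2 * (p x * |Z x|) + 2 * m * p x) = 4 * a * m := by
    rw [integral_const_mul, integral_add (hi1.const_mul 2) (hpi.const_mul (2 * m)),
      integral_const_mul, integral_const_mul, ← hm, hp1]
    ring
  rw [hH] at key
  have hnn : 0 ≤ ∫ x, p x * Z x ^ 2 := integral_nonneg fun x => mul_nonneg (hp0 x) (sq_nonneg _)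
  nlinarith [mul_le_mul_of_nonneg_left hhalf hnn]

theorem ApproxLogConcave.mul_le_sq_midpoint {E : Type*} [AddCommGroup E] [Module ℝ E]
    {p : E → ℝ} {a : ℝ} (h : ApproxLogConcave a p) (ha : 0 < a) (hp0 : ∀ x, 0 ≤ p x) (x y : E) :
    p x * p y ≤ ((1 / a) ^ 2 * p ((2 : ℝ)⁻¹ • (x + y))) ^ 2 := by
  obtain ⟨g, ⟨hg0, hg⟩, hpg⟩ := h
  have hmid := hg x y 2⁻¹ 2⁻¹ (by norm_num) (by norm_num) (by norm_num)
  rw [← smul_add, ← Real.mul_rpow (hg0 x) (hg0 y)] at hmid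
  set z := (2 : ℝ)⁻¹ • (x + y)
  have hz : g z ≤ 1 / a * p z := by
    rw [one_div, ← div_eq_inv_mul, le_div_iff₀ ha, mul_comm]
    exact (hpg z).1
  have hsq : g x * g y ≤ g z ^ 2 := by
    calc g x * g y = ((g x * g y) ^ (2⁻¹ : ℝ)) ^ 2 := by
          rw [← Real.rpow_natCast, ← Real.rpow_mul (mul_nonneg (hg0 x) (hg0 y))]
          norm_num
      _ ≤ g z ^ 2 := by
        have := Real.rpow_nonneg (mul_nonneg (hg0 x) (hg0 y)) 2⁻¹
        gcongr
  calc p x * p y ≤ (1 / a * g x) * (1 / a * g y) :=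
        mul_le_mul (hpg x).2 (hpg y).2 (hp0 y) (by have := hg0 x; positivity)
    _ = (1 / a) ^ 2 * (g x * g y) := by ring
    _ ≤ (1 / a) ^ 2 * (1 / a * p z) ^ 2 := by
      have := hg0 z
      gcongr
      exact hsq.trans (by gcongr)
    _ = _ := by ring

/-- A convex function is dominated in mean by any law whose linear functionals have large enough
first absolute central moments. -/
theorem ConvexOn.average_le_integral {E : Type*} [NormedAddCommGroup E] [NormedSpace ℝ E]
    [CompleteSpace E] [MeasurableSpace E] [BorelSpace E] {ν : Measure E} [IsProbabilityMeasure ν]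
    {h : E → ℝ} (hconv : ConvexOn ℝ Set.univ h) (hcont : Continuous h) (hint : Integrable h ν)
    (hid : Integrable (fun x => x) ν) {m v : E} (hm : ∫ x, x ∂ν = m)
    (hv : ∀ l : StrongDual ℝ E, 2 * l v ≤ ∫ x, |l (x - m)| ∂ν) :
    (h (m + v) + h (m - v)) / 2 ≤ ∫ x, h x ∂ν := by
  refine le_of_forall_pos_sub_le fun η hη => ?_
  obtain ⟨l₁, c₁, hle₁, heq₁⟩ := hconv.exists_affine_le_of_lt (𝕜 := ℝ) (x := m + v)
    (a := h (m + v) - η) (Set.mem_univ _) (by linarith) isClosed_univ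
    hcont.continuousOn.lowerSemicontinuousOn
  obtain ⟨l₂, c₂, hle₂, heq₂⟩ := hconv.exists_affine_le_of_lt (𝕜 := ℝ) (x := m - v)
    (a := h (m - v) - η) (Set.mem_univ _) (by linarith) isClosed_univ
    hcont.continuousOn.lowerSemicontinuousOn
  simp only [RCLike.re_to_real, map_add, map_sub] at heq₁ heq₂
  have hle₁' : ∀ x, l₁ x + c₁ ≤ h x := fun x => hle₁ ⟨x, Set.mem_univ _⟩
  have hle₂' : ∀ x, l₂ x + c₂ ≤ h x := fun x => hle₂ ⟨x, Set.mem_univ _⟩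
  set w : StrongDual ℝ E := (2⁻¹ : ℝ) • (l₁ - l₂) with hw
  set s : ℝ := (l₁ m + c₁ - (l₂ m + c₂)) / 2 with hs
  have hcen : Integrable (fun x => x - m) ν := hid.sub (integrable_const m)
  have hwi : Integrable (fun x => w (x - m)) ν := w.integrable_comp hcen
  have hw0 : ∫ x, w (x - m) ∂ν = 0 := by
    rw [w.integral_comp_comm hcen, integral_sub hid (integrable_const m), hm]
    simp
  have hsi : Integrable (fun x => |w (x - m) + s|) ν := (hwi.add (integrable_const s)).abs
  have hZ : ∫ x, |w (x - m)| ∂ν ≤ 2 * ∫ x, |w (x - m) + s| ∂ν := by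
    have h1 : ∫ x, |w (x - m)| ∂ν ≤ ∫ x, |w (x - m) + s| ∂ν + |s| := by
      have : ∫ x, (|w (x - m) + s| + |s|) ∂ν = ∫ x, |w (x - m) + s| ∂ν + |s| := by
        rw [integral_add hsi (integrable_const _)]
        simp
      rw [← this]
      refine integral_mono hwi.abs (hsi.add (integrable_const _)) fun x => ?_
      have := abs_sub (w (x - m) + s) s
      simpa using this
    have h2 : |s| ≤ ∫ x, |w (x - m) + s| ∂ν := by
      have : ∫ x, (w (x - m) + s) ∂ν = s := by
        rw [integral_add hwi (integrable_const _), hw0]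
        simp
      calc |s| = |∫ x, (w (x - m) + s) ∂ν| := by rw [this]
        _ ≤ _ := abs_integral_le_integral_abs
    linarith
  set u : StrongDual ℝ E := (2⁻¹ : ℝ) • (l₁ + l₂) with hu
  have hui : Integrable (fun x => u (x - m)) ν := u.integrable_comp hcen
  have hu0 : ∫ x, u (x - m) ∂ν = 0 := by
    rw [u.integral_comp_comm hcen, integral_sub hid (integrable_const m), hm]
    simp
  set b : ℝ := (l₁ m + c₁ + (l₂ m + c₂)) / 2 with hb
  have hubi : Integrable (fun x => u (x - m) + b) ν := hui.add (integrable_const b)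
  have hlow : ∀ x, u (x - m) + b + |w (x - m) + s| ≤ h x := by
    intro x
    have h1 := hle₁' x
    have h2 := hle₂' x
    have e1 : u (x - m) = 2⁻¹ * ((l₁ x - l₁ m) + (l₂ x - l₂ m)) := by simp [hu, mul_add]
    have e2 : w (x - m) = 2⁻¹ * ((l₁ x - l₁ m) - (l₂ x - l₂ m)) := by simp [hw]
    rw [e1, e2]
    rcases abs_cases (2⁻¹ * ((l₁ x - l₁ m) - (l₂ x - l₂ m)) + s) with ⟨h3, -⟩ | ⟨h3, -⟩ <;>
      rw [h3] <;> linarith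
  have hfin : b + ∫ x, |w (x - m) + s| ∂ν ≤ ∫ x, h x ∂ν := by
    have : ∫ x, (u (x - m) + b + |w (x - m) + s|) ∂ν = b + ∫ x, |w (x - m) + s| ∂ν := by
      rw [integral_add hubi hsi,
        integral_add hui (integrable_const b), hu0]
      simp
    rw [← this]
    exact integral_mono (hubi.add hsi) hint hlow
  have hwv := hv w
  have e3 : w v = 2⁻¹ * (l₁ v - l₂ v) := by simp [hw]
  rw [e3] at hwv
  linarith

/-- The density of the standard Gaussian measure on `ℝⁿ`. -/
def stdGaussPdf (n : ℕ) (z : EuclideanSpace ℝ (Fin n)) : ℝ :=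
  (2 * π) ^ (-(n : ℝ) / 2) * Real.exp (-(1 / 2) * ‖z‖ ^ 2)

theorem stdGaussPdf_nonneg (n : ℕ) (z : EuclideanSpace ℝ (Fin n)) : 0 ≤ stdGaussPdf n z := by
  unfold stdGaussPdf
  positivity

theorem continuous_stdGaussPdf (n : ℕ) : Continuous (stdGaussPdf n) := by
  unfold stdGaussPdf
  fun_prop

theorem integral_exp_neg_mul_sq_norm_euclidean (n : ℕ) {b : ℝ} (hb : 0 < b) :
    ∫ z : EuclideanSpace ℝ (Fin n), Real.exp (-b * ‖z‖ ^ 2) = (π / b) ^ ((n : ℝ) / 2) := by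
  rw [GaussianFourier.integral_rexp_neg_mul_sq_norm hb, finrank_euclideanSpace_fin]

theorem integrable_exp_neg_mul_sq_norm_euclidean (n : ℕ) {b : ℝ} (hb : 0 < b) :
    Integrable fun z : EuclideanSpace ℝ (Fin n) => Real.exp (-b * ‖z‖ ^ 2) := by
  by_contra h
  have h0 := integral_exp_neg_mul_sq_norm_euclidean n hb
  rw [integral_undef h] at h0
  have : 0 < (π / b) ^ ((n : ℝ) / 2) := by positivity
  exact this.ne h0

theorem integrable_stdGaussPdf (n : ℕ) : Integrable (stdGaussPdf n) :=
  (integrable_exp_neg_mul_sq_norm_euclidean n (by norm_num : (0 : ℝ) < 1 / 2)).const_mul _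

theorem stdGaussian_eq_withDensity (n : ℕ) :
    stdGaussian (EuclideanSpace ℝ (Fin n)) =
      volume.withDensity fun z => ENNReal.ofReal (stdGaussPdf n z) := by
  have : IsFiniteMeasure
      ((volume : Measure (EuclideanSpace ℝ (Fin n))).withDensity
        fun z => ENNReal.ofReal (stdGaussPdf n z)) :=
    isFiniteMeasure_withDensity_ofReal (integrable_stdGaussPdf n).2
  refine Measure.ext_of_charFun (funext fun t => ?_)
  rw [charFun_stdGaussian, charFun_apply, integral_withDensity_eq_integral_toReal_smul
    (continuous_stdGaussPdf n).measurable.ennreal_ofReal (by simp)]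
  have hint := GaussianFourier.integral_cexp_neg_mul_sq_norm_add
    (V := EuclideanSpace ℝ (Fin n)) (b := 1 / 2) (by norm_num) Complex.I t
  have hrw : ∀ z : EuclideanSpace ℝ (Fin n),
      (ENNReal.ofReal (stdGaussPdf n z)).toReal • Complex.exp (↑(inner ℝ z t) * Complex.I) =
        (((2 * π) ^ (-(n : ℝ) / 2) : ℝ) : ℂ) *
          Complex.exp (-(1 / 2) * (‖z‖ : ℂ) ^ 2 + Complex.I * ↑(inner ℝ t z)) := by
    intro z
    rw [ENNReal.toReal_ofReal (stdGaussPdf_nonneg n z), stdGaussPdf, Complex.real_smul,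
      Complex.exp_add, real_inner_comm]
    push_cast
    ring_nf
  simp_rw [hrw]
  rw [integral_const_mul, hint, finrank_euclideanSpace_fin, Complex.I_sq, ← mul_assoc]
  have hone : (((2 * π) ^ (-(n : ℝ) / 2) : ℝ) : ℂ) * (π / (1 / 2)) ^ ((n : ℂ) / 2) = 1 := by
    have h1 : ((π : ℂ) / (1 / 2)) ^ ((n : ℂ) / 2) = (((2 * π) ^ ((n : ℝ) / 2) : ℝ) : ℂ) := by
      rw [Complex.ofReal_cpow (by positivity)]
      push_cast
      congr 1
      ring
    rw [h1, ← Complex.ofReal_mul, ← Real.rpow_add (by positivity)]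
    simp [neg_div]
  rw [hone, one_mul]
  congr 1
  ring

theorem integral_stdGaussian (n : ℕ) (F : EuclideanSpace ℝ (Fin n) → ℝ) :
    ∫ z, F z ∂stdGaussian (EuclideanSpace ℝ (Fin n)) = ∫ z, stdGaussPdf n z * F z := by
  rw [stdGaussian_eq_withDensity, integral_withDensity_eq_integral_toReal_smul
    (continuous_stdGaussPdf n).measurable.ennreal_ofReal (by simp)]
  simp [ENNReal.toReal_ofReal (stdGaussPdf_nonneg n _)]

theorem gaussPdf_add_toEuclideanCLM {n : ℕ} (μ z : EuclideanSpace ℝ (Fin n))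
    {A : Matrix (Fin n) (Fin n) ℝ} (hA : A.det ≠ 0) :
    |A.det| * gaussPdf n μ (A * A.transpose) (μ + Matrix.toEuclideanCLM (𝕜 := ℝ) A z) =
      stdGaussPdf n z := by
  have hu : IsUnit A.det := hA.isUnit
  have hdet : (A * A.transpose).det ^ (-(1 : ℝ) / 2) = |A.det|⁻¹ := by
    rw [Matrix.det_mul, Matrix.det_transpose, ← sq, ← sq_abs, ← Real.rpow_natCast,
      ← Real.rpow_mul (abs_nonneg _)]
    norm_num
    rw [Real.rpow_neg_one]
  have hquad : ∑ i, ∑ j, ((μ + Matrix.toEuclideanCLM (𝕜 := ℝ) A z) i - μ i) *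
      (A * A.transpose)⁻¹ i j * ((μ + Matrix.toEuclideanCLM (𝕜 := ℝ) A z) j - μ j) =
        ‖z‖ ^ 2 := by
    have h1 : ∑ i, ∑ j, ((μ + Matrix.toEuclideanCLM (𝕜 := ℝ) A z) i - μ i) *
        (A * A.transpose)⁻¹ i j * ((μ + Matrix.toEuclideanCLM (𝕜 := ℝ) A z) j - μ j) =
        dotProduct (A.mulVec z.ofLp) ((A * A.transpose)⁻¹.mulVec (A.mulVec z.ofLp)) := by
      simp only [dotProduct, Matrix.mulVec, PiLp.add_apply, Matrix.ofLp_toEuclideanCLM,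
        add_sub_cancel_left, Finset.mul_sum, mul_assoc]
    rw [h1, Matrix.mul_inv_rev, Matrix.mulVec_mulVec, Matrix.mul_assoc,
      Matrix.nonsing_inv_mul _ hu, Matrix.mul_one, Matrix.dotProduct_mulVec,
      Matrix.vecMul_mulVec, Matrix.mul_nonsing_inv _ (by rwa [Matrix.det_transpose]),
      Matrix.vecMul_one, EuclideanSpace.real_norm_sq_eq]
    simp only [dotProduct, sq]
  rw [gaussPdf, hdet, hquad, stdGaussPdf]
  field_simp

theorem integral_gaussPdf_mul {n : ℕ} (μ : EuclideanSpace ℝ (Fin n))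
    {A : Matrix (Fin n) (Fin n) ℝ} (hA : A.det ≠ 0) (F : EuclideanSpace ℝ (Fin n) → ℝ) :
    ∫ x, gaussPdf n μ (A * A.transpose) x * F x =
      ∫ z, F (μ + Matrix.toEuclideanCLM (𝕜 := ℝ) A z)
        ∂stdGaussian (EuclideanSpace ℝ (Fin n)) := by
  have hdet : LinearMap.det (Matrix.toEuclideanLin A) = A.det := by
    change LinearMap.det (Matrix.toLpLin 2 2 A) = A.det
    rw [Matrix.toLpLin_eq_toLin, LinearMap.det_toLin]
  let e : EuclideanSpace ℝ (Fin n) ≃L[ℝ] EuclideanSpace ℝ (Fin n) :=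
    (LinearMap.equivOfDetNeZero (Matrix.toEuclideanLin A) (by rwa [hdet])).toContinuousLinearEquiv
  have he : ∀ z, e z = Matrix.toEuclideanCLM (𝕜 := ℝ) A z := fun z => rfl
  have hmap : Measure.map e volume =
      ENNReal.ofReal |A.det⁻¹| • (volume : Measure (EuclideanSpace ℝ (Fin n))) := by
    have := Measure.map_linearMap_addHaar_eq_smul_addHaar
      (volume : Measure (EuclideanSpace ℝ (Fin n))) (f := Matrix.toEuclideanLin A) (by rwa [hdet])
    rw [hdet] at this
    exact this
  have hcv : ∀ G : EuclideanSpace ℝ (Fin n) → ℝ, ∫ x, G x = |A.det| * ∫ z, G (e z) := by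
    intro G
    have hG : ∫ x, G x ∂Measure.map e volume = ∫ z, G (e z) :=
      e.toHomeomorph.measurableEmbedding.integral_map G
    rw [← hG, hmap, integral_smul_measure, ENNReal.toReal_ofReal (abs_nonneg _), abs_inv,
      smul_eq_mul, mul_inv_cancel_left₀ (abs_ne_zero.2 hA)]
  rw [integral_stdGaussian, ← integral_add_left_eq_self _ μ, hcv, ← integral_const_mul]
  congr with z
  rw [← mul_assoc, he, gaussPdf_add_toEuclideanCLM μ z hA]

theorem stdGaussian_map_smul_add_smul {n : ℕ} {a b : ℝ} (hab : a ^ 2 + b ^ 2 = 1) :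
    ((stdGaussian (EuclideanSpace ℝ (Fin n))).prod (stdGaussian (EuclideanSpace ℝ (Fin n)))).map
      (fun q => a • q.1 + b • q.2) = stdGaussian (EuclideanSpace ℝ (Fin n)) := by
  set γ := stdGaussian (EuclideanSpace ℝ (Fin n)) with hγ
  have hconv : (γ.prod γ).map (fun q => a • q.1 + b • q.2) =
      (γ.map (a • ·)).conv (γ.map (b • ·)) := by
    rw [Measure.conv, Measure.map_prod_map _ _ (by fun_prop) (by fun_prop),
      Measure.map_map (by fun_prop) (by fun_prop)]
    rfl
  have : IsProbabilityMeasure (γ.map (a • ·)) := Measure.isProbabilityMeasure_map (by fun_prop)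
  have : IsProbabilityMeasure (γ.map (b • ·)) := Measure.isProbabilityMeasure_map (by fun_prop)
  rw [hconv]
  refine Measure.ext_of_charFun (funext fun t => ?_)
  rw [charFun_conv, charFun_map_smul, charFun_map_smul, charFun_stdGaussian, charFun_stdGaussian,
    charFun_stdGaussian, ← Complex.exp_add, norm_smul, norm_smul]
  congr 1
  norm_cast
  rw [mul_pow, mul_pow, Real.norm_eq_abs, Real.norm_eq_abs, sq_abs, sq_abs]
  linear_combination (-‖t‖ ^ 2 / 2) * hab

theorem integrable_exp_stdGaussian (n : ℕ) :
    Integrable (fun z => Real.exp (‖z‖ ^ 2 / 4)) (stdGaussian (EuclideanSpace ℝ (Fin n))) := by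
  rw [stdGaussian_eq_withDensity, integrable_withDensity_iff_integrable_smul'
    (continuous_stdGaussPdf n).measurable.ennreal_ofReal (by simp)]
  simp_rw [ENNReal.toReal_ofReal (stdGaussPdf_nonneg n _), stdGaussPdf, smul_eq_mul, mul_assoc,
    ← Real.exp_add]
  refine Integrable.const_mul ?_ _
  refine (integrable_exp_neg_mul_sq_norm_euclidean n (by norm_num : (0 : ℝ) < 1 / 4)).congr
    (.of_forall fun z => ?_)
  simp only
  ring_nf

theorem integral_exp_stdGaussian (n : ℕ) :
    ∫ z, Real.exp (‖z‖ ^ 2 / 4) ∂stdGaussian (EuclideanSpace ℝ (Fin n)) = 2 ^ ((n : ℝ) / 2) := by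
  rw [integral_stdGaussian]
  have h : ∀ z : EuclideanSpace ℝ (Fin n), stdGaussPdf n z * Real.exp (‖z‖ ^ 2 / 4) =
      (2 * π) ^ (-(n : ℝ) / 2) * Real.exp (-(1 / 4) * ‖z‖ ^ 2) := by
    intro z
    rw [stdGaussPdf, mul_assoc, ← Real.exp_add]
    ring_nf
  simp_rw [h]
  rw [integral_const_mul, integral_exp_neg_mul_sq_norm_euclidean n (by norm_num),
    show π / (1 / 4) = 2 * (2 * π) by ring,
    Real.mul_rpow (x := 2) (y := 2 * π) (by norm_num) (by positivity),
    mul_left_comm, ← Real.rpow_add (by positivity)]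
  simp [neg_div]

/-- Tail estimate for the norm under the standard Gaussian measure. -/
theorem integral_indicator_norm_stdGaussian_le (n : ℕ) {R : ℝ} (hR : 0 ≤ R) :
    ∫ z, {z | R < ‖z‖}.indicator (fun z => ‖z‖) z ∂stdGaussian (EuclideanSpace ℝ (Fin n)) ≤
      2 * Real.exp (-R ^ 2 / 8) * 2 ^ ((n : ℝ) / 2) := by
  rw [← integral_exp_stdGaussian, ← integral_const_mul]
  refine integral_mono_of_nonneg
    (.of_forall fun z => Set.indicator_nonneg (fun z _ => norm_nonneg z) z)
    ((integrable_exp_stdGaussian n).const_mul _) (.of_forall fun z => ?_)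
  refine Set.indicator_le' (g := fun z => 2 * Real.exp (-R ^ 2 / 8) * Real.exp (‖z‖ ^ 2 / 4))
    (fun z hz => ?_) (fun z _ => by positivity) z
  have hz : R < ‖z‖ := hz
  have h1 : ‖z‖ ≤ 2 * Real.exp (‖z‖ ^ 2 / 8) := by
    have := Real.add_one_le_exp (‖z‖ ^ 2 / 8)
    nlinarith [sq_nonneg (‖z‖ / 2 - 1)]
  have h2 : Real.exp (‖z‖ ^ 2 / 8) ≤ Real.exp (-R ^ 2 / 8) * Real.exp (‖z‖ ^ 2 / 4) := by
    rw [← Real.exp_add]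
    gcongr
    nlinarith
  linarith

theorem LipschitzWith.integrable_comp_of_isFiniteMeasure {α E : Type*} [MeasurableSpace α]
    [NormedAddCommGroup E] {μ : Measure α} [IsFiniteMeasure μ] {L : ℝ≥0}
    {h : E → ℝ} (hh : LipschitzWith L h) {g : α → E} (hg : Integrable g μ) :
    Integrable (fun x => h (g x)) μ := by
  refine Integrable.mono' ((integrable_const |h 0|).add (hg.norm.const_mul (L : ℝ)))
    (hh.continuous.comp_aestronglyMeasurable hg.1) (.of_forall fun x => ?_)
  have h1 := hh.dist_le_mul (g x) 0
  rw [dist_zero_right, Real.dist_eq] at h1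
  have h2 := abs_sub_abs_le_abs_sub (h (g x)) (h 0)
  simp only [Pi.add_apply, Real.norm_eq_abs]
  linarith

/-- A centred Gaussian law whose covariance is small compared with the first absolute moments of
`ν` is dominated by `ν` on Lipschitz convex functions, up to a Gaussian tail. -/
theorem ConvexOn.integral_stdGaussian_le {n : ℕ} {ν : Measure (EuclideanSpace ℝ (Fin n))}
    [IsProbabilityMeasure ν] {h : EuclideanSpace ℝ (Fin n) → ℝ} {L : ℝ≥0}
    (hconv : ConvexOn ℝ Set.univ h) (hLip : LipschitzWith L h)
    (hid : Integrable (fun x => x) ν) {m : EuclideanSpace ℝ (Fin n)} (hm : ∫ x, x ∂ν = m)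
    {M : EuclideanSpace ℝ (Fin n) →L[ℝ] EuclideanSpace ℝ (Fin n)} {R D : ℝ}
    (hMR : ∀ z, ‖z‖ ≤ R → ∀ l : StrongDual ℝ (EuclideanSpace ℝ (Fin n)),
      2 * l (M z) ≤ ∫ x, |l (x - m)| ∂ν)
    (hMD : ∀ z, ‖M z‖ ≤ D * ‖z‖) :
    ∫ z, h (m + M z) ∂stdGaussian (EuclideanSpace ℝ (Fin n)) ≤ ∫ x, h x ∂ν +
      L * D * ∫ z, {z | R < ‖z‖}.indicator (fun z => ‖z‖) z
        ∂stdGaussian (EuclideanSpace ℝ (Fin n)) := by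
  set γ := stdGaussian (EuclideanSpace ℝ (Fin n))
  have hγ : Integrable (fun z => z) γ := IsGaussian.integrable_id
  have hint : Integrable h ν := hLip.integrable_comp_of_isFiniteMeasure hid
  have hpos : Integrable (fun z => h (m + M z)) γ :=
    hLip.integrable_comp_of_isFiniteMeasure ((integrable_const m).add (M.integrable_comp hγ))
  have hneg : Integrable (fun z => h (m - M z)) γ :=
    hLip.integrable_comp_of_isFiniteMeasure ((integrable_const m).sub (M.integrable_comp hγ))
  have hsymm : ∫ z, h (m - M z) ∂γ = ∫ z, h (m + M z) ∂γ := by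
    have hmap : Measure.map (fun z => -z) γ = γ :=
      stdGaussian_map (LinearIsometryEquiv.neg ℝ (E := EuclideanSpace ℝ (Fin n)))
    have hc : Continuous fun z => h (m + M z) := hLip.continuous.comp (by fun_prop)
    conv_rhs => rw [← hmap]
    rw [integral_map (by fun_prop) hc.aestronglyMeasurable]
    simp [sub_eq_add_neg]
  have havg : ∫ z, (h (m + M z) + h (m - M z)) / 2 ∂γ = ∫ z, h (m + M z) ∂γ := by
    rw [integral_div, integral_add hpos hneg, hsymm]
    ring
  have hind : Integrable (fun z => {z | R < ‖z‖}.indicator (fun z => ‖z‖) z) γ :=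
    hγ.norm.indicator (measurableSet_lt measurable_const measurable_norm)
  have hrhs : ∫ z, (∫ x, h x ∂ν + L * D * {z | R < ‖z‖}.indicator (fun z => ‖z‖) z) ∂γ =
      ∫ x, h x ∂ν + L * D * ∫ z, {z | R < ‖z‖}.indicator (fun z => ‖z‖) z ∂γ := by
    rw [integral_add (integrable_const _) (hind.const_mul _), integral_const_mul]
    simp
  rw [← havg, ← hrhs]
  refine integral_mono ((hpos.add hneg).div_const 2)
    ((integrable_const _).add (hind.const_mul _)) fun z => ?_
  by_cases hz : R < ‖z‖
  · have hmean : h m ≤ ∫ x, h x ∂ν := by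
      have := hconv.average_le_integral hLip.continuous hint hid hm (v := 0)
        (fun l => by
          rw [map_zero, mul_zero]
          exact integral_nonneg fun x => abs_nonneg _)
      simpa using this
    have hbd : ∀ v, ‖v‖ = ‖M z‖ → h (m + v) ≤ h m + L * (D * ‖z‖) := by
      intro v hv
      have h1 := hLip.dist_le_mul (m + v) m
      rw [Real.dist_eq, dist_self_add_left, hv] at h1
      have h2 : (L : ℝ) * ‖M z‖ ≤ L * (D * ‖z‖) := by
        gcongr
        exact hMD z
      linarith [le_abs_self (h (m + v) - h m)]
    have h1 := hbd (M z) rfl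
    have h2 := hbd (-M z) (norm_neg _)
    rw [← sub_eq_add_neg] at h2
    rw [Set.indicator_of_mem (show z ∈ {z | R < ‖z‖} from hz)]
    linarith
  · rw [Set.indicator_of_notMem (show z ∉ {z | R < ‖z‖} from hz), mul_zero, add_zero]
    exact hconv.average_le_integral hLip.continuous hint hid hm (hMR z (not_lt.1 hz))

/-- Domination of a Gaussian law by its interpolation with `ν`, on Lipschitz convex functions. -/
theorem ConvexOn.integral_stdGaussian_le_interpolation {n : ℕ}
    {ν : Measure (EuclideanSpace ℝ (Fin n))} [IsProbabilityMeasure ν]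
    {f : EuclideanSpace ℝ (Fin n) → ℝ} {L : ℝ≥0} (hconv : ConvexOn ℝ Set.univ f)
    (hLip : LipschitzWith L f) (hid : Integrable (fun x => x) ν)
    {m : EuclideanSpace ℝ (Fin n)} (hm : ∫ x, x ∂ν = m)
    {B : EuclideanSpace ℝ (Fin n) →L[ℝ] EuclideanSpace ℝ (Fin n)} {lam t R D : ℝ}
    (hlam0 : 0 ≤ lam) (hlam1 : lam ≤ 1) (ht : (1 - lam) ^ 2 + (lam * t) ^ 2 = 1)
    (hBR : ∀ z, ‖z‖ ≤ R → ∀ l : StrongDual ℝ (EuclideanSpace ℝ (Fin n)),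
      2 * l ((t • B) z) ≤ ∫ x, |l (x - m)| ∂ν)
    (hBD : ∀ z, ‖(t • B) z‖ ≤ D * ‖z‖) :
    ∫ z, f (m + B z) ∂stdGaussian (EuclideanSpace ℝ (Fin n)) ≤
      (∫ z, ∫ x, f ((1 - lam) • (m + B z) + lam • x) ∂ν
        ∂stdGaussian (EuclideanSpace ℝ (Fin n))) +
      L * D * ∫ z, {z | R < ‖z‖}.indicator (fun z => ‖z‖) z
        ∂stdGaussian (EuclideanSpace ℝ (Fin n)) := by
  set γ := stdGaussian (EuclideanSpace ℝ (Fin n)) with hγdef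
  set err := L * D * ∫ z, {z | R < ‖z‖}.indicator (fun z => ‖z‖) z ∂γ
  have hγ : Integrable (fun z => z) γ := IsGaussian.integrable_id
  have hγ1 : Integrable (fun q : _ × _ => q.1) (γ.prod γ) := hγ.comp_fst γ
  have hγ2 : Integrable (fun q : _ × _ => q.2) (γ.prod γ) := hγ.comp_snd γ
  have hγν1 : Integrable (fun q : _ × _ => q.1) (γ.prod ν) := hγ.comp_fst ν
  have hγν2 : Integrable (fun q : _ × _ => q.2) (γ.prod ν) := hid.comp_snd γ
  have hl : Integrable (fun q : _ × _ => f (m + B ((1 - lam) • q.1 + (lam * t) • q.2)))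
      (γ.prod γ) :=
    hLip.integrable_comp_of_isFiniteMeasure
      ((integrable_const m).add (B.integrable_comp ((hγ1.smul (1 - lam)).add (hγ2.smul (lam * t)))))
  have hr : Integrable (fun q : _ × _ => f ((1 - lam) • (m + B q.1) + lam • q.2))
      (γ.prod ν) :=
    hLip.integrable_comp_of_isFiniteMeasure
      ((((integrable_const m).add (B.integrable_comp hγν1)).smul (1 - lam)).add (hγν2.smul lam))
  have hfB : Continuous fun z => f (m + B z) := hLip.continuous.comp (by fun_prop)
  have hsplit : ∫ z, f (m + B z) ∂γ =
      ∫ z, ∫ z', f (m + B ((1 - lam) • z + (lam * t) • z')) ∂γ ∂γ := by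
    conv_lhs => rw [hγdef, ← stdGaussian_map_smul_add_smul ht]
    rw [integral_map (by fun_prop) hfB.aestronglyMeasurable, ← hγdef, integral_prod _ hl]
  have hadd : (∫ z, ∫ x, f ((1 - lam) • (m + B z) + lam • x) ∂ν ∂γ) + err =
      ∫ z, ((∫ x, f ((1 - lam) • (m + B z) + lam • x) ∂ν) + err) ∂γ := by
    rw [integral_add hr.integral_prod_left (integrable_const _)]
    simp
  rw [hsplit, hadd]
  refine integral_mono hl.integral_prod_left (hr.integral_prod_left.add (integrable_const _))
    fun z => ?_
  have hhconv : ConvexOn ℝ Set.univ fun y => f ((1 - lam) • (m + B z) + lam • y) := by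
    refine ⟨convex_univ, fun x _ y _ a b ha hb hab => ?_⟩
    have := hconv.2 (Set.mem_univ ((1 - lam) • (m + B z) + lam • x))
      (Set.mem_univ ((1 - lam) • (m + B z) + lam • y)) ha hb hab
    obtain rfl : a = 1 - b := by linarith
    have hcomb : (1 - lam) • (m + B z) + lam • ((1 - b) • x + b • y) =
        (1 - b) • ((1 - lam) • (m + B z) + lam • x) +
          b • ((1 - lam) • (m + B z) + lam • y) := by module
    simpa only [hcomb] using this
  have hhLip : LipschitzWith L fun y => f ((1 - lam) • (m + B z) + lam • y) := by
    refine LipschitzWith.of_dist_le_mul fun x y => (hLip.dist_le_mul _ _).trans ?_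
    gcongr
    rw [dist_add_left, dist_smul₀, Real.norm_of_nonneg hlam0]
    exact mul_le_of_le_one_left dist_nonneg hlam1
  have key := hhconv.integral_stdGaussian_le hhLip hid hm hBR hBD
  refine (le_of_eq ?_).trans key
  congr with z'
  congr 1
  simp only [_root_.smul_apply, map_add, map_smul]
  module

theorem inner_toEuclideanCLM_eq_inner_transpose {n : ℕ} (A : Matrix (Fin n) (Fin n) ℝ)
    (w z : EuclideanSpace ℝ (Fin n)) :
    inner ℝ w (Matrix.toEuclideanCLM (𝕜 := ℝ) A z) =
      inner ℝ (Matrix.toEuclideanCLM (𝕜 := ℝ) A.transpose w) z := by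
  simp only [EuclideanSpace.inner_eq_star_dotProduct, star_trivial, Matrix.ofLp_toEuclideanCLM]
  rw [Matrix.mulVec_transpose, dotProduct_comm, Matrix.dotProduct_mulVec, dotProduct_comm]

theorem norm_sq_toEuclideanCLM_transpose {n : ℕ} (A : Matrix (Fin n) (Fin n) ℝ)
    (w : EuclideanSpace ℝ (Fin n)) :
    ‖Matrix.toEuclideanCLM (𝕜 := ℝ) A.transpose w‖ ^ 2 =
      w.ofLp ⬝ᵥ ((A * A.transpose).mulVec w.ofLp) := by
  rw [← real_inner_self_eq_norm_sq, ← inner_toEuclideanCLM_eq_inner_transpose]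
  simp only [EuclideanSpace.inner_eq_star_dotProduct, star_trivial, Matrix.ofLp_toEuclideanCLM]
  rw [Matrix.mulVec_mulVec, dotProduct_comm]

/-- The probability measure with density `p`. -/
def densMeasure (n : ℕ) (p : EuclideanSpace ℝ (Fin n) → ℝ) : Measure (EuclideanSpace ℝ (Fin n)) :=
  volume.withDensity fun x => ENNReal.ofReal (p x)

section densMeasure

variable {n : ℕ} {p : EuclideanSpace ℝ (Fin n) → ℝ} {K : Set (EuclideanSpace ℝ (Fin n))}

theorem isProbabilityMeasure_densMeasure (hpi : Integrable p) (hp0 : ∀ x, 0 ≤ p x)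
    (hp1 : ∫ x, p x = 1) : IsProbabilityMeasure (densMeasure n p) := by
  refine ⟨?_⟩
  rw [densMeasure, withDensity_apply _ MeasurableSet.univ, Measure.restrict_univ,
    ← ofReal_integral_eq_lintegral_ofReal hpi (.of_forall hp0), hp1, ENNReal.ofReal_one]

theorem integral_densMeasure (hpi : Integrable p) (hp0 : ∀ x, 0 ≤ p x) {F : Type*}
    [NormedAddCommGroup F] [NormedSpace ℝ F] (g : EuclideanSpace ℝ (Fin n) → F) :
    ∫ x, g x ∂densMeasure n p = ∫ x, p x • g x := by
  rw [densMeasure, integral_withDensity_eq_integral_toReal_smul₀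
    hpi.aemeasurable.ennreal_ofReal (by simp)]
  simp [ENNReal.toReal_ofReal (hp0 _)]

theorem integrable_densMeasure_iff (hpi : Integrable p) (hp0 : ∀ x, 0 ≤ p x) {F : Type*}
    [NormedAddCommGroup F] [NormedSpace ℝ F] {g : EuclideanSpace ℝ (Fin n) → F} :
    Integrable g (densMeasure n p) ↔ Integrable fun x => p x • g x := by
  rw [densMeasure, integrable_withDensity_iff_integrable_smul₀'
    hpi.aemeasurable.ennreal_ofReal (by simp)]
  simp [ENNReal.toReal_ofReal (hp0 _)]

theorem ae_mem_densMeasure (hpi : Integrable p) (hsupp : ∀ x, x ∉ K → p x = 0) :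
    ∀ᵐ x ∂densMeasure n p, x ∈ K := by
  rw [densMeasure, ae_withDensity_iff' hpi.aemeasurable.ennreal_ofReal]
  refine .of_forall fun x hx => ?_
  by_contra hxK
  simp [hsupp x hxK] at hx

theorem Continuous.integrable_densMeasure [IsFiniteMeasure (densMeasure n p)]
    (hpi : Integrable p) (hK : IsCompact K) (hsupp : ∀ x, x ∉ K → p x = 0) {F : Type*}
    [NormedAddCommGroup F] {g : EuclideanSpace ℝ (Fin n) → F} (hg : Continuous g) :
    Integrable g (densMeasure n p) := by
  obtain ⟨C, hC⟩ := hK.exists_bound_of_continuousOn hg.continuousOn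
  exact Integrable.of_bound hg.aestronglyMeasurable C
    ((ae_mem_densMeasure hpi hsupp).mono fun x hx => hC x hx)

theorem dotProduct_densCov_mulVec [IsFiniteMeasure (densMeasure n p)]
    (hpi : Integrable p) (hp0 : ∀ x, 0 ≤ p x) (hK : IsCompact K)
    (hsupp : ∀ x, x ∉ K → p x = 0) (w : EuclideanSpace ℝ (Fin n)) :
    w.ofLp ⬝ᵥ ((densCov n p).mulVec w.ofLp) =
      ∫ x, inner ℝ w (x - densMean n p) ^ 2 ∂densMeasure n p := by
  have hcov : ∀ i j, densCov n p i j =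
      ∫ x, (x i - densMean n p i) * (x j - densMean n p j) ∂densMeasure n p := by
    intro i j
    rw [integral_densMeasure hpi hp0]
    rfl
  have hterm : ∀ i j : Fin n, Integrable (fun x : EuclideanSpace ℝ (Fin n) =>
      w i * ((x i - densMean n p i) * (x j - densMean n p j) * w j)) (densMeasure n p) :=
    fun i j => Continuous.integrable_densMeasure hpi hK hsupp (by fun_prop)
  have hexp : ∀ x : EuclideanSpace ℝ (Fin n), inner ℝ w (x - densMean n p) ^ 2 =
      ∑ i, ∑ j, w i * ((x i - densMean n p i) * (x j - densMean n p j) * w j) := by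
    intro x
    simp only [EuclideanSpace.inner_eq_star_dotProduct, star_trivial, dotProduct, sq,
      Finset.sum_mul_sum, PiLp.sub_apply]
    refine Finset.sum_congr rfl fun i _ => Finset.sum_congr rfl fun j _ => ?_
    ring
  simp_rw [hexp]
  rw [integral_finsetSum _ fun i _ => integrable_finsetSum _ fun j _ => hterm i j]
  simp only [dotProduct, Matrix.mulVec, Finset.mul_sum]
  refine Finset.sum_congr rfl fun i _ => ?_
  rw [integral_finsetSum _ fun j _ => hterm i j]
  refine Finset.sum_congr rfl fun j _ => ?_
  rw [integral_const_mul, integral_mul_const, hcov]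

theorem posSemidef_densCov [IsFiniteMeasure (densMeasure n p)]
    (hpi : Integrable p) (hp0 : ∀ x, 0 ≤ p x) (hK : IsCompact K)
    (hsupp : ∀ x, x ∉ K → p x = 0) : (densCov n p).PosSemidef := by
  refine Matrix.PosSemidef.of_dotProduct_mulVec_nonneg ?_ fun w => ?_
  · ext i j
    simp only [Matrix.conjTranspose_apply, star_trivial, densCov, Matrix.of_apply]
    congr with x
    ring
  · have := dotProduct_densCov_mulVec hpi hp0 hK hsupp (WithLp.toLp 2 w)
    simp only [star_trivial] at this ⊢
    rw [this]
    exact integral_nonneg fun x => sq_nonneg _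

theorem norm_sub_densMean_le [IsProbabilityMeasure (densMeasure n p)]
    (hpi : Integrable p) (hp0 : ∀ x, 0 ≤ p x) (hK : IsCompact K)
    (hsupp : ∀ x, x ∉ K → p x = 0) {x : EuclideanSpace ℝ (Fin n)} (hx : x ∈ K) :
    ‖x - densMean n p‖ ≤ Metric.diam K := by
  have hid : Integrable (fun y => y) (densMeasure n p) :=
    continuous_id.integrable_densMeasure hpi hK hsupp
  have hmean : x - densMean n p = ∫ y, (x - y) ∂densMeasure n p := by
    rw [integral_sub (integrable_const x) hid, integral_densMeasure hpi hp0 fun y => y]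
    simp [densMean]
  rw [hmean]
  refine (norm_integral_le_of_norm_le_const (C := Metric.diam K)
    ((ae_mem_densMeasure hpi hsupp).mono fun y hy => ?_)).trans (by simp)
  rw [← dist_eq_norm]
  exact Metric.dist_le_diam_of_mem hK.isBounded hx hy

/-- A reverse Hölder inequality for linear functionals of approximately log-concave laws. -/
theorem integral_inner_sq_densMeasure_le [IsFiniteMeasure (densMeasure n p)]
    (hpi : Integrable p) (hp0 : ∀ x, 0 ≤ p x) (hp1 : ∫ x, p x = 1) (hK : IsCompact K)
    (hsupp : ∀ x, x ∉ K → p x = 0) {a : ℝ} (ha : 0 < a) (hlc : ApproxLogConcave a p)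
    (w m : EuclideanSpace ℝ (Fin n)) :
    ∫ x, inner ℝ w (x - m) ^ 2 ∂densMeasure n p ≤
      32 * (1 / a) ^ 4 * (∫ x, |inner ℝ w (x - m)| ∂densMeasure n p) ^ 2 := by
  have h1 : Integrable (fun x => |inner ℝ w (x - m)|) (densMeasure n p) :=
    Continuous.integrable_densMeasure hpi hK hsupp (by fun_prop)
  have h2 : Integrable (fun x => inner ℝ w (x - m) ^ 2) (densMeasure n p) :=
    Continuous.integrable_densMeasure hpi hK hsupp (by fun_prop)
  rw [integrable_densMeasure_iff hpi hp0] at h1 h2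
  have key := integral_mul_sq_le_of_midpoint (Z := fun x => inner ℝ w (x - m))
    (a := (1 / a) ^ 2) (by positivity) hp0 hp1 (hlc.mul_le_sq_midpoint ha hp0)
    (Continuous.measurable (by fun_prop)) (fun x y => ?_) h1 h2
  · rw [integral_densMeasure hpi hp0, integral_densMeasure hpi hp0]
    refine key.trans_eq ?_
    simp only [smul_eq_mul]
    ring
  · have hmid : inner ℝ w (x - m) =
        2 * inner ℝ w ((2 : ℝ)⁻¹ • (x + y) - m) - inner ℝ w (y - m) := by
      simp only [inner_sub_right, inner_smul_right, inner_add_right]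
      ring
    rw [hmid]
    refine (abs_sub _ _).trans ?_
    rw [abs_mul, abs_two]

end densMeasure

theorem Matrix.PosSemidef.exists_mul_transpose_eq {n : ℕ} {S : Matrix (Fin n) (Fin n) ℝ}
    (hS : S.PosSemidef) : ∃ A : Matrix (Fin n) (Fin n) ℝ, A * A.transpose = S := by
  open scoped MatrixOrder Matrix.Norms.L2Operator in
  obtain ⟨B, hB⟩ := CStarAlgebra.nonneg_iff_eq_star_mul_self.1 hS.nonneg
  refine ⟨B.transpose, ?_⟩
  rw [hB, Matrix.transpose_transpose, Matrix.star_eq_conjTranspose,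
    Matrix.conjTranspose_eq_transpose_of_trivial]

/-- If `‖Aᵀ w‖ ≤ D ‖w‖` for all `w`, then also `‖A z‖ ≤ D ‖z‖` for all `z`. -/
theorem norm_toEuclideanCLM_le_of_transpose {n : ℕ} {A : Matrix (Fin n) (Fin n) ℝ} {D : ℝ}
    (h : ∀ w, ‖Matrix.toEuclideanCLM (𝕜 := ℝ) A.transpose w‖ ≤ D * ‖w‖)
    (z : EuclideanSpace ℝ (Fin n)) :
    ‖Matrix.toEuclideanCLM (𝕜 := ℝ) A z‖ ≤ D * ‖z‖ := by
  set u := Matrix.toEuclideanCLM (𝕜 := ℝ) A z with hu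
  have h1 : ‖u‖ ^ 2 ≤ D * ‖z‖ * ‖u‖ := by
    rw [← real_inner_self_eq_norm_sq]
    nth_rw 2 [hu]
    rw [inner_toEuclideanCLM_eq_inner_transpose]
    calc _ ≤ ‖Matrix.toEuclideanCLM (𝕜 := ℝ) A.transpose u‖ * ‖z‖ := real_inner_le_norm _ _
      _ ≤ D * ‖u‖ * ‖z‖ := by
        gcongr
        exact h u
      _ = _ := by ring
  rcases (norm_nonneg u).eq_or_lt with h0 | h0
  · rw [← h0]
    rcases (norm_nonneg z).eq_or_lt with hz | hz
    · simp [← hz]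
    · exact (norm_nonneg _).trans (h z)
  · exact le_of_mul_le_mul_right (by rwa [← sq]) h0

theorem gaussian_tail_error_le {n : ℕ} (hn : 1 ≤ n) {T : ℝ} (hT : 10 ≤ T) :
    T * T * (2 * Real.exp (-(8 * √(n * Real.log T)) ^ 2 / 8) * 2 ^ ((n : ℝ) / 2)) ≤
      1 / T ^ 2 := by
  have hT0 : 0 < T := by linarith
  have hn' : (1 : ℝ) ≤ n := by exact_mod_cast hn
  have hlog : 1 ≤ Real.log T := by
    rw [Real.le_log_iff_exp_le hT0]
    linarith [Real.exp_one_lt_d9]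
  have h2 : (2 : ℝ) ≤ Real.exp 1 := by linarith [Real.add_one_le_exp 1]
  have hpow : (2 : ℝ) ^ ((n : ℝ) / 2) ≤ Real.exp ((n : ℝ) / 2) := by
    calc (2 : ℝ) ^ ((n : ℝ) / 2) ≤ (Real.exp 1) ^ ((n : ℝ) / 2) := by gcongr
      _ = _ := by rw [Real.exp_one_rpow]
  have hexp : -(8 * √(n * Real.log T)) ^ 2 / 8 = -8 * (n * Real.log T) := by
    rw [mul_pow, Real.sq_sqrt (by positivity)]
    ring
  rw [hexp, le_div_iff₀ (by positivity)]
  calc T * T * (2 * Real.exp (-8 * (n * Real.log T)) * 2 ^ ((n : ℝ) / 2)) * T ^ 2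
      = 2 * 2 ^ ((n : ℝ) / 2) * Real.exp (-8 * (n * Real.log T)) * T ^ 4 := by ring
    _ ≤ Real.exp 1 * Real.exp ((n : ℝ) / 2) * Real.exp (-8 * (n * Real.log T)) * T ^ 4 := by
      gcongr
    _ = Real.exp (1 + (n : ℝ) / 2 + -8 * (n * Real.log T) + 4 * Real.log T) := by
      have : T ^ 4 = Real.exp (4 * Real.log T) := by
        rw [← Real.log_rpow hT0, Real.exp_log (by positivity)]
        norm_cast
      rw [this, Real.exp_add, Real.exp_add, Real.exp_add]
    _ ≤ 1 := by
      rw [Real.exp_le_one_iff]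
      nlinarith [mul_le_mul hn' hlog zero_le_one (by linarith)]

theorem gaussPdf_of_det_eq_zero {n : ℕ} {S : Matrix (Fin n) (Fin n) ℝ} (hS : S.det = 0)
    (μ x : EuclideanSpace ℝ (Fin n)) : gaussPdf n μ S x = 0 := by
  rw [gaussPdf, hS, Real.zero_rpow (by norm_num)]
  ring

/-- **Lemma 4.1.** The Gaussian core `c[p]` is approximately convexly dominated by the
kernelized measure `K[p]p`, the law of `(1-λ)C + λX` with `C ∼ c[p]`, `X ∼ p` independent. -/
theorem gaussian_core_convex_domination
    (n : ℕ) (hn : 1 ≤ n) (T : ℝ) (hT : 10 ≤ T) (hTn : (n : ℝ) ≤ T)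
    (ε lam : ℝ) (hε : ε = 1 / (1600 * Real.exp 1)) (hlam : lam ∈ Set.Ioo (0 : ℝ) (1 / 2))
    (K : Set (EuclideanSpace ℝ (Fin n))) (hKcompact : IsCompact K) (hKconv : Convex ℝ K)
    (hKint : (interior K).Nonempty) (hKdiam : Metric.diam K ≤ T)
    (p : EuclideanSpace ℝ (Fin n) → ℝ) (hp0 : ∀ x, 0 ≤ p x)
    (hp1 : ∫ x, p x = 1) (hpsupp : ∀ x, x ∉ K → p x = 0)
    (hplc : ApproxLogConcave (1 / Real.exp 1) p)
    (f : EuclideanSpace ℝ (Fin n) → ℝ)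
    (hf0 : ∀ x, 0 ≤ f x) (hfconv : ConvexOn ℝ Set.univ f)
    (hfLip : LipschitzWith T.toNNReal f)
    (hf1 : ∀ x ∈ K, f x ≤ 1) :
    ∫ x, gaussPdf n (densMean n p)
        ((ε ^ 2 / (n * Real.log T) * (lam / (2 - lam))) • densCov n p) x * f x
      ≤ (∫ c, ∫ x,
            gaussPdf n (densMean n p)
                ((ε ^ 2 / (n * Real.log T) * (lam / (2 - lam))) • densCov n p) c
              * (p x * f ((1 - lam) • c + lam • x)))
        + 1 / T ^ 2 := by
  have hT0 : 0 < T := by linarith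
  have hn' : (1 : ℝ) ≤ n := by exact_mod_cast hn
  have hlog : 1 ≤ Real.log T := by
    rw [Real.le_log_iff_exp_le hT0]
    linarith [Real.exp_one_lt_d9]
  obtain ⟨hlam0, hlam1⟩ := hlam
  have hpi : Integrable p := by
    by_contra hni
    simp [integral_undef hni] at hp1
  have hprob := isProbabilityMeasure_densMeasure hpi hp0 hp1
  set δ := ε ^ 2 / (n * Real.log T) with hδ
  have hδ0 : 0 ≤ δ := by positivity
  set κ := δ * (lam / (2 - lam)) with hκ
  have hκ0 : 0 ≤ κ := mul_nonneg hδ0 (div_nonneg hlam0.le (by linarith))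
  by_cases hdet : (κ • densCov n p).det = 0
  · simp only [gaussPdf_of_det_eq_zero hdet, zero_mul, integral_zero]
    positivity
  obtain ⟨A, hA⟩ := ((posSemidef_densCov hpi hp0 hKcompact hpsupp).smul hκ0).exists_mul_transpose_eq
  have hAdet : A.det ≠ 0 := by
    intro h
    rw [← hA, Matrix.det_mul, h, zero_mul] at hdet
    exact hdet rfl
  simp_rw [integral_const_mul]
  rw [← hA, integral_gaussPdf_mul _ hAdet, integral_gaussPdf_mul _ hAdet]
  set m := densMean n p with hm
  set t := √((2 - lam) / lam) with ht
  have ht0 : 0 ≤ t := Real.sqrt_nonneg _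
  have ht2 : t ^ 2 = (2 - lam) / lam := Real.sq_sqrt (div_nonneg (by linarith) hlam0.le)
  have hmean : ∫ x, x ∂densMeasure n p = m := by
    rw [integral_densMeasure hpi hp0]
    rfl
  have hid : Integrable (fun x => x) (densMeasure n p) :=
    continuous_id.integrable_densMeasure hpi hKcompact hpsupp
  -- The rescaled map `t • A` has covariance `δ • densCov n p`.
  have hquad : ∀ w, ‖Matrix.toEuclideanCLM (𝕜 := ℝ) (t • A).transpose w‖ ^ 2 =
      δ * ∫ x, inner ℝ w (x - m) ^ 2 ∂densMeasure n p := by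
    intro w
    rw [Matrix.transpose_smul, map_smul, _root_.smul_apply, norm_smul, mul_pow,
      norm_sq_toEuclideanCLM_transpose, hA, Matrix.smul_mulVec, dotProduct_smul,
      dotProduct_densCov_mulVec hpi hp0 hKcompact hpsupp, Real.norm_of_nonneg ht0, ht2, hκ,
      smul_eq_mul, ← mul_assoc]
    congr 1
    have : 2 - lam ≠ 0 := by linarith
    field_simp
  have hBD : ∀ z, ‖(t • Matrix.toEuclideanCLM (𝕜 := ℝ) A) z‖ ≤ T * ‖z‖ := by
    rw [← map_smul]
    refine norm_toEuclideanCLM_le_of_transpose fun w => ?_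
    refine le_of_sq_le_sq ?_ (by positivity)
    have hbound : ∫ x, inner ℝ w (x - m) ^ 2 ∂densMeasure n p ≤ (T * ‖w‖) ^ 2 := by
      have hconst : ∫ _, (T * ‖w‖) ^ 2 ∂densMeasure n p = (T * ‖w‖) ^ 2 := by simp
      rw [← hconst]
      refine integral_mono_ae (Continuous.integrable_densMeasure hpi hKcompact hpsupp
        (by fun_prop)) (integrable_const _) ((ae_mem_densMeasure hpi hpsupp).mono fun x hx => ?_)
      have h1 := (norm_sub_densMean_le hpi hp0 hKcompact hpsupp hx).trans hKdiam
      refine sq_le_sq' (neg_le_of_abs_le ?_) (le_of_abs_le ?_) <;>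
      · refine (abs_real_inner_le_norm _ _).trans ?_
        rw [mul_comm]
        gcongr
    have hδ1 : δ ≤ 1 := by
      have hε1 : ε ^ 2 ≤ 1 := by
        refine pow_le_one₀ (by rw [hε]; positivity) ?_
        rw [hε, div_le_one (by positivity)]
        linarith [Real.add_one_le_exp 1]
      exact div_le_one_of_le₀ (hε1.trans (one_le_mul_of_one_le_of_one_le hn' hlog)) (by positivity)
    rw [hquad]
    exact (mul_le_of_le_one_left (integral_nonneg fun x => sq_nonneg _) hδ1).trans hbound
  have hBR : ∀ z, ‖z‖ ≤ 8 * √(n * Real.log T) →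
      ∀ l : StrongDual ℝ (EuclideanSpace ℝ (Fin n)),
      2 * l ((t • Matrix.toEuclideanCLM (𝕜 := ℝ) A) z) ≤
        ∫ x, |l (x - m)| ∂densMeasure n p := by
    rw [← map_smul]
    intro z hz l
    obtain ⟨w, rfl⟩ := (InnerProductSpace.toDual ℝ (EuclideanSpace ℝ (Fin n))).surjective l
    simp only [InnerProductSpace.toDual_apply_apply]
    rw [inner_toEuclideanCLM_eq_inner_transpose]
    set u := Matrix.toEuclideanCLM (𝕜 := ℝ) (t • A).transpose w
    set I := ∫ x, |inner ℝ w (x - m)| ∂densMeasure n p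
    have hI : 0 ≤ I := integral_nonneg fun x => abs_nonneg _
    have hmom := integral_inner_sq_densMeasure_le hpi hp0 hp1 hKcompact hpsupp (by positivity)
      hplc w m
    have hexp : Real.exp 1 ^ 2 ≤ 9 := by
      have := Real.exp_one_lt_d9
      nlinarith [Real.exp_pos 1]
    have hscale : δ * (8 * √(n * Real.log T)) ^ 2 * (128 * (1 / (1 / Real.exp 1)) ^ 4) ≤ 1 := by
      have hcancel : δ * (8 * √(n * Real.log T)) ^ 2 * (128 * (1 / (1 / Real.exp 1)) ^ 4) =
          8192 / 1600 ^ 2 * Real.exp 1 ^ 2 := by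
        rw [mul_pow, Real.sq_sqrt (by positivity), hδ, hε]
        field_simp
        norm_num
      rw [hcancel]
      linarith
    have hu : (2 * (‖u‖ * (8 * √(n * Real.log T)))) ^ 2 ≤ I ^ 2 := by
      calc (2 * (‖u‖ * (8 * √(n * Real.log T)))) ^ 2
          = 4 * ‖u‖ ^ 2 * (8 * √(n * Real.log T)) ^ 2 := by ring
        _ ≤ 4 * (δ * (32 * (1 / (1 / Real.exp 1)) ^ 4 * I ^ 2)) *
            (8 * √(n * Real.log T)) ^ 2 := by
          rw [hquad]
          gcongr
        _ = δ * (8 * √(n * Real.log T)) ^ 2 * (128 * (1 / (1 / Real.exp 1)) ^ 4) * I ^ 2 := by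
          ring
        _ ≤ I ^ 2 := mul_le_of_le_one_left (sq_nonneg I) hscale
    calc 2 * inner ℝ u z ≤ 2 * (‖u‖ * ‖z‖) := by
          gcongr
          exact real_inner_le_norm u z
      _ ≤ 2 * (‖u‖ * (8 * √(n * Real.log T))) := by gcongr
      _ ≤ I := le_of_sq_le_sq hu hI
  have key := hfconv.integral_stdGaussian_le_interpolation hfLip hid hmean hlam0.le
    (by linarith) (t := t) (B := Matrix.toEuclideanCLM (𝕜 := ℝ) A)
    (by rw [mul_pow, ht2]; field_simp; ring) hBR hBD
  simp_rw [integral_densMeasure hpi hp0, smul_eq_mul] at key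
  refine key.trans ?_
  gcongr
  rw [Real.coe_toNNReal _ hT0.le]
  refine le_trans ?_ (gaussian_tail_error_le hn hT)
  gcongr
  exact integral_indicator_norm_stdGaussian_le n (by positivity)
end
end

section
/- Let ε ∈ (0,1/2), let p be an isotropic ε-approximately log-concave probability density on ℝⁿ, and let r be a probability measure with mean 0 whose support is contained in the Euclidean ball {x ∈ ℝⁿ : |x| ≤ ε/80}. Then r is convexly dominated by p; that is, for every convex function φ : ℝⁿ → ℝ that is integrable with respect to p, one has ∫ φ dr ≤ ∫ φ dp. -/
open MeasureTheory ProbabilityTheory Real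

noncomputable section

open scoped ENNReal Pointwise

theorem volume_add_volume_le_of_isCompact {K L S : Set ℝ} (hK : IsCompact K) (hL : IsCompact L)
    (hK0 : K.Nonempty) (hL0 : L.Nonempty) (hS : ∀ x ∈ K, ∀ y ∈ L, x + y ∈ S) :
    volume K + volume L ≤ volume S := by
  have hM := hK.sSup_mem hK0
  have hm := hL.sInf_mem hL0
  set M := sSup K
  set m := sInf L
  have h1 : volume ((fun x => m + x) '' K) = volume K := by
    rw [Set.image_add_left, measure_preimage_add]
  have h2 : volume ((fun x => M + x) '' L) = volume L := by
    rw [Set.image_add_left, measure_preimage_add]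
  rw [← h1, ← h2, ← measure_union₀]
  · apply measure_mono
    rintro _ (⟨x, hx, rfl⟩ | ⟨x, hx, rfl⟩)
    · simpa [add_comm] using hS x hx m hm
    · exact hS M hM x hx
  · exact (hL.image (by fun_prop)).measurableSet.nullMeasurableSet
  · refine measure_mono_null (t := {M + m}) ?_ (by simp)
    rintro _ ⟨⟨x, hx, rfl⟩, ⟨y, hy, hxy⟩⟩
    have hxM : x ≤ M := le_csSup hK.bddAbove hx
    have hmy : m ≤ y := csInf_le hL.bddBelow hy
    simp only [Set.mem_singleton_iff] at hxy ⊢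
    linarith

theorem measure_add_le_of_forall_isCompact {α : Type*} [TopologicalSpace α] [MeasurableSpace α]
    {μ : Measure α} [μ.InnerRegular] {A : Set α} (hA : MeasurableSet A) {x c : ℝ≥0∞}
    (h : ∀ K ⊆ A, IsCompact K → μ K + x ≤ c) : μ A + x ≤ c := by
  by_contra! hlt
  have hxc : x ≤ c := by simpa using h ∅ (Set.empty_subset A) isCompact_empty
  have hx : x ≠ ∞ := (hxc.trans_lt (hlt.trans_le le_top)).ne
  obtain ⟨K, hKA, hK, hcK⟩ := hA.exists_lt_isCompact ((ENNReal.sub_lt_iff_lt_right hx hxc).2 hlt)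
  exact (h K hKA hK).not_gt ((ENNReal.sub_lt_iff_lt_right hx hxc).1 hcK)

/-- The one-dimensional Brunn–Minkowski inequality. -/
theorem volume_add_volume_le {A B S : Set ℝ} (hA : MeasurableSet A) (hB : MeasurableSet B)
    (hA0 : A.Nonempty) (hB0 : B.Nonempty) (hS : ∀ x ∈ A, ∀ y ∈ B, x + y ∈ S) :
    volume A + volume B ≤ volume S := by
  obtain ⟨x₀, hx₀⟩ := hA0
  obtain ⟨y₀, hy₀⟩ := hB0
  refine measure_add_le_of_forall_isCompact hA fun K hKA hK => ?_
  rw [add_comm]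
  refine measure_add_le_of_forall_isCompact hB fun L hLB hL => ?_
  rw [add_comm]
  refine (add_le_add (measure_mono (Set.subset_insert x₀ K))
    (measure_mono (Set.subset_insert y₀ L))).trans ?_
  refine volume_add_volume_le_of_isCompact (hK.insert _) (hL.insert _)
    (Set.insert_nonempty _ _) (Set.insert_nonempty _ _) fun x hx y hy => hS x ?_ y ?_
  · exact Set.insert_subset hx₀ hKA hx
  · exact Set.insert_subset hy₀ hLB hy

theorem ofReal_mul_volume_add_le {A B S : Set ℝ} {a b : ℝ} (ha : 0 < a) (hb : 0 < b)
    (hA : MeasurableSet A) (hB : MeasurableSet B) (hA0 : A.Nonempty) (hB0 : B.Nonempty)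
    (hS : ∀ x ∈ A, ∀ y ∈ B, a * x + b * y ∈ S) :
    ENNReal.ofReal a * volume A + ENNReal.ofReal b * volume B ≤ volume S := by
  have key := volume_add_volume_le (A := a • A) (B := b • B) (S := S)
    (hA.const_smul₀ a) (hB.const_smul₀ b) hA0.smul_set hB0.smul_set (by
      rintro _ ⟨x, hx, rfl⟩ _ ⟨y, hy, rfl⟩
      exact hS x hx y hy)
  simpa [Measure.addHaar_smul, abs_of_pos ha, abs_of_pos hb] using key

theorem lintegral_eq_lintegral_volume_lt {f : ℝ → ℝ≥0∞} (hf : Measurable f) (hf1 : ∀ x, f x ≤ 1) :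
    ∫⁻ x, f x = ∫⁻ t in Set.Ioi (0 : ℝ), volume {x | ENNReal.ofReal t < f x} := by
  have hfin : ∀ x, f x ≠ ∞ := fun x => ((hf1 x).trans_lt ENNReal.one_lt_top).ne
  have h := lintegral_eq_lintegral_meas_lt (f := fun x => (f x).toReal) volume
    (Filter.Eventually.of_forall fun x => ENNReal.toReal_nonneg) hf.ennreal_toReal.aemeasurable
  simp only [ENNReal.ofReal_toReal (hfin _)] at h
  rw [h]
  refine setLIntegral_congr_fun measurableSet_Ioi fun t ht => ?_
  congr 1
  ext x
  exact (ENNReal.ofReal_lt_iff_lt_toReal (le_of_lt ht) (hfin x)).symm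

theorem ENNReal.rpow_mul_rpow_le_add {a b : ℝ} (ha : 0 < a) (hb : 0 < b) (hab : a + b = 1)
    (x y : ℝ≥0∞) : x ^ a * y ^ b ≤ ENNReal.ofReal a * x + ENNReal.ofReal b * y := by
  have hpq : Real.HolderConjugate a⁻¹ b⁻¹ := by
    rw [Real.holderConjugate_iff]
    refine ⟨?_, by simpa using hab⟩
    exact (one_lt_inv₀ ha).2 (by linarith)
  have h := ENNReal.young_inequality (x ^ a) (y ^ b) hpq
  rw [← ENNReal.rpow_mul, ← ENNReal.rpow_mul, mul_inv_cancel₀ ha.ne', mul_inv_cancel₀ hb.ne',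
    ENNReal.rpow_one, ENNReal.rpow_one, ENNReal.ofReal_inv_of_pos ha,
    ENNReal.ofReal_inv_of_pos hb, div_eq_mul_inv, div_eq_mul_inv, inv_inv, inv_inv] at h
  rwa [mul_comm x, mul_comm y] at h

theorem prekopaLeindler_real_of_iSup_eq_one {a b : ℝ} (ha : 0 < a) (hb : 0 < b) (hab : a + b = 1)
    {f g h : ℝ → ℝ≥0∞} (hf : Measurable f) (hg : Measurable g) (hh : Measurable h)
    (hf1 : ⨆ x, f x = 1) (hg1 : ⨆ x, g x = 1)
    (H : ∀ x y, f x ^ a * g y ^ b ≤ h (a * x + b * y)) :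
    (∫⁻ x, f x) ^ a * (∫⁻ x, g x) ^ b ≤ ∫⁻ x, h x := by
  have hfle : ∀ x, f x ≤ 1 := fun x => hf1 ▸ le_iSup f x
  have hgle : ∀ x, g x ≤ 1 := fun x => hg1 ▸ le_iSup g x
  refine (ENNReal.rpow_mul_rpow_le_add ha hb hab _ _).trans ?_
  refine le_trans ?_ (lintegral_mono fun x => min_le_left (h x) 1)
  have hmeas : ∀ k : ℝ → ℝ≥0∞, Measurable fun t : ℝ => volume {x | ENNReal.ofReal t < k x} := by
    intro k
    refine Antitone.measurable fun s t hst => measure_mono fun x hx => ?_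
    exact (ENNReal.ofReal_le_ofReal hst).trans_lt hx
  rw [lintegral_eq_lintegral_volume_lt hf hfle, lintegral_eq_lintegral_volume_lt hg hgle,
    lintegral_eq_lintegral_volume_lt (hh.min measurable_const) (fun x => min_le_right _ _),
    ← lintegral_const_mul _ (hmeas f), ← lintegral_const_mul _ (hmeas g),
    ← lintegral_add_left ((hmeas f).const_mul _)]
  refine lintegral_mono fun t => ?_
  rcases lt_or_ge (ENNReal.ofReal t) 1 with ht | ht
  · refine ofReal_mul_volume_add_le ha hb (measurableSet_lt measurable_const hf)
      (measurableSet_lt measurable_const hg) (lt_iSup_iff.1 (ht.trans_eq hf1.symm))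
      (lt_iSup_iff.1 (ht.trans_eq hg1.symm))
      fun x hx y hy => lt_min (lt_of_lt_of_le ?_ (H x y)) ht
    calc ENNReal.ofReal t = ENNReal.ofReal t ^ a * ENNReal.ofReal t ^ b := by
          rw [← ENNReal.rpow_add_of_nonneg _ _ ha.le hb.le, hab, ENNReal.rpow_one]
      _ < f x ^ a * g y ^ b :=
          ENNReal.mul_lt_mul (ENNReal.rpow_lt_rpow hx ha) (ENNReal.rpow_lt_rpow hy hb)
  · have h0 : ∀ k : ℝ → ℝ≥0∞, (∀ x, k x ≤ 1) → {x | ENNReal.ofReal t < k x} = ∅ := by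
      intro k hk
      ext x
      simpa using (hk x).trans ht
    simp [h0 f hfle, h0 g hgle]

theorem prekopaLeindler_real_of_bounded {a b : ℝ} (ha : 0 < a) (hb : 0 < b) (hab : a + b = 1)
    {f g h : ℝ → ℝ≥0∞} (hf : Measurable f) (hg : Measurable g) (hh : Measurable h)
    (hf1 : ⨆ x, f x ≠ ∞) (hg1 : ⨆ x, g x ≠ ∞)
    (H : ∀ x y, f x ^ a * g y ^ b ≤ h (a * x + b * y)) :
    (∫⁻ x, f x) ^ a * (∫⁻ x, g x) ^ b ≤ ∫⁻ x, h x := by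
  by_cases hf0 : ⨆ x, f x = 0
  · simp [ENNReal.iSup_eq_zero.1 hf0, ha]
  by_cases hg0 : ⨆ x, g x = 0
  · simp [ENNReal.iSup_eq_zero.1 hg0, hb]
  set M := ⨆ x, f x
  set N := ⨆ x, g x
  have hMa : M ^ a ≠ 0 ∧ M ^ a ≠ ∞ := by simp [ha, hf0, hf1, ha.not_gt]
  have hNb : N ^ b ≠ 0 ∧ N ^ b ≠ ∞ := by simp [hb, hg0, hg1, hb.not_gt]
  have key := prekopaLeindler_real_of_iSup_eq_one ha hb hab (f := fun x => M⁻¹ * f x)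
    (g := fun x => N⁻¹ * g x) (h := fun x => ((M ^ a)⁻¹ * (N ^ b)⁻¹) * h x)
    (hf.const_mul _) (hg.const_mul _) (hh.const_mul _)
    (by rw [← ENNReal.mul_iSup]; exact ENNReal.inv_mul_cancel hf0 hf1)
    (by rw [← ENNReal.mul_iSup]; exact ENNReal.inv_mul_cancel hg0 hg1)
    (by
      intro x y
      rw [ENNReal.mul_rpow_of_nonneg _ _ ha.le, ENNReal.mul_rpow_of_nonneg _ _ hb.le,
        ENNReal.inv_rpow, ENNReal.inv_rpow, mul_mul_mul_comm]
      exact mul_le_mul_right (H x y) _)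
  rw [lintegral_const_mul _ hf, lintegral_const_mul _ hg, lintegral_const_mul _ hh,
    ENNReal.mul_rpow_of_nonneg _ _ ha.le, ENNReal.mul_rpow_of_nonneg _ _ hb.le,
    ENNReal.inv_rpow, ENNReal.inv_rpow, mul_mul_mul_comm] at key
  refine (ENNReal.mul_le_mul_iff_right ?_ ?_).1 key
  · exact mul_ne_zero (ENNReal.inv_ne_zero.2 hMa.2) (ENNReal.inv_ne_zero.2 hNb.2)
  · exact ENNReal.mul_ne_top (ENNReal.inv_ne_top.2 hMa.1) (ENNReal.inv_ne_top.2 hNb.1)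

/-- `E` satisfies the Prékopa–Leindler inequality with weights `a` and `b`. -/
def PrekopaLeindler (a b : ℝ) (E : Type*) [MeasureSpace E] [AddCommMonoid E] [SMul ℝ E] : Prop :=
  ∀ f g h : E → ℝ≥0∞, Measurable f → Measurable g → Measurable h →
    (∀ x y, f x ^ a * g y ^ b ≤ h (a • x + b • y)) →
    (∫⁻ x, f x) ^ a * (∫⁻ x, g x) ^ b ≤ ∫⁻ x, h x

theorem lintegral_eq_iSup_lintegral_min {f : ℝ → ℝ≥0∞} (hf : Measurable f) :
    ∫⁻ x, f x = ⨆ k : ℕ, ∫⁻ x, min (f x) k := by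
  rw [← lintegral_iSup (fun k => hf.min measurable_const)]
  · congr 1
    ext x
    have := ENNReal.iSup_natCast
    rw [show (fun k : ℕ => min (f x) (k : ℝ≥0∞)) = fun k : ℕ => f x ⊓ (k : ℝ≥0∞) from rfl,
      ← inf_iSup_eq, this, inf_top_eq]
  · intro j k hjk x
    exact min_le_min_left _ (by exact_mod_cast hjk)

theorem prekopaLeindler_real {a b : ℝ} (ha : 0 < a) (hb : 0 < b) (hab : a + b = 1) :
    PrekopaLeindler a b ℝ := by
  intro f g h hf hg hh H
  have key : ∀ k : ℕ, (∫⁻ x, min (f x) k) ^ a * (∫⁻ x, min (g x) k) ^ b ≤ ∫⁻ x, h x := by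
    intro k
    have hfin : ∀ u : ℝ → ℝ≥0∞, ⨆ x, min (u x) (k : ℝ≥0∞) ≠ ∞ := fun u =>
      ((iSup_le fun x => min_le_right _ _).trans_lt (ENNReal.natCast_lt_top k)).ne
    refine prekopaLeindler_real_of_bounded ha hb hab (hf.min measurable_const)
      (hg.min measurable_const) hh (hfin f) (hfin g) fun x y => le_trans ?_ (H x y)
    gcongr <;> exact min_le_left _ _
  have hmono : ∀ u : ℝ → ℝ≥0∞, Monotone fun k : ℕ => ∫⁻ x, min (u x) (k : ℝ≥0∞) :=
    fun u j k hjk => lintegral_mono fun x => min_le_min_left _ (by exact_mod_cast hjk)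
  have htend : ∀ u : ℝ → ℝ≥0∞, Measurable u → Filter.Tendsto
      (fun k : ℕ => ∫⁻ x, min (u x) (k : ℝ≥0∞)) Filter.atTop (nhds (∫⁻ x, u x)) := by
    intro u hu
    rw [lintegral_eq_iSup_lintegral_min hu]
    exact tendsto_atTop_iSup (hmono u)
  by_cases hf0 : ∫⁻ x, f x = 0
  · simp [hf0, ha]
  by_cases hg0 : ∫⁻ x, g x = 0
  · simp [hg0, hb]
  refine le_of_tendsto' (ENNReal.Tendsto.mul
    ((ENNReal.continuous_rpow_const.tendsto _).comp (htend f hf)) (Or.inl ?_)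
    ((ENNReal.continuous_rpow_const.tendsto _).comp (htend g hg)) (Or.inl ?_)) key
  · simp [hf0, ha.not_gt]
  · simp [hg0, hb.not_gt]

theorem PrekopaLeindler.prod {a b : ℝ} {E F : Type*} [MeasureSpace E] [AddCommMonoid E] [SMul ℝ E]
    [MeasureSpace F] [AddCommMonoid F] [SMul ℝ F] [SFinite (volume : Measure F)]
    (hE : PrekopaLeindler a b E) (hF : PrekopaLeindler a b F) : PrekopaLeindler a b (E × F) := by
  intro f g h hf hg hh H
  rw [Measure.volume_eq_prod, lintegral_prod _ hf.aemeasurable, lintegral_prod _ hg.aemeasurable,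
    lintegral_prod _ hh.aemeasurable]
  refine hE _ _ _ hf.lintegral_prod_right' hg.lintegral_prod_right' hh.lintegral_prod_right'
    fun s t => ?_
  exact hF _ _ _ (hf.comp measurable_prodMk_left) (hg.comp measurable_prodMk_left)
    (hh.comp measurable_prodMk_left) fun x y => H (s, x) (t, y)

theorem PrekopaLeindler.of_measurePreserving {a b : ℝ} {E F : Type*} [MeasureSpace E]
    [AddCommMonoid E] [SMul ℝ E] [MeasureSpace F] [AddCommMonoid F] [SMul ℝ F]
    (hE : PrekopaLeindler a b E) (T : E → F) (hT : MeasurePreserving T)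
    (hlin : ∀ x y, T (a • x + b • y) = a • T x + b • T y) : PrekopaLeindler a b F := by
  intro f g h hf hg hh H
  rw [← hT.lintegral_comp hf, ← hT.lintegral_comp hg, ← hT.lintegral_comp hh]
  refine hE _ _ _ (hf.comp hT.measurable) (hg.comp hT.measurable) (hh.comp hT.measurable)
    fun x y => ?_
  simpa only [Function.comp, hlin] using H (T x) (T y)

theorem prekopaLeindler_pi {a b : ℝ} (ha : 0 < a) (hb : 0 < b) (hab : a + b = 1) (n : ℕ) :
    PrekopaLeindler a b (Fin n → ℝ) := by
  induction n with
  | zero =>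
    intro f g h hf hg hh H
    have : (volume : Measure (Fin 0 → ℝ)) = Measure.dirac 0 := by
      rw [volume_pi, Measure.pi_of_empty _ 0]
    rw [this, lintegral_dirac, lintegral_dirac, lintegral_dirac]
    simpa using H 0 0
  | succ n ih =>
    refine ((prekopaLeindler_real ha hb hab).prod ih).of_measurePreserving
      (MeasurableEquiv.piFinSuccAbove (fun _ => ℝ) 0).symm
      (volume_preserving_piFinSuccAbove (fun _ : Fin (n + 1) => ℝ) 0).symm fun x y => ?_
    rw [MeasurableEquiv.symm_apply_eq]
    ext <;> simp [MeasurableEquiv.piFinSuccAbove, Fin.tail]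

/-- The **Prékopa–Leindler inequality** on Euclidean space. -/
theorem prekopaLeindler_euclideanSpace {a b : ℝ} (ha : 0 < a) (hb : 0 < b) (hab : a + b = 1)
    (n : ℕ) : PrekopaLeindler a b (EuclideanSpace ℝ (Fin n)) :=
  (prekopaLeindler_pi ha hb hab n).of_measurePreserving (WithLp.toLp 2)
    (PiLp.volume_preserving_toLp (Fin n)) fun _ _ => rfl

theorem sum_Ico_cube_mul_le {d : ℕ → ℝ≥0∞} {N : ℕ}
    (hd : ∀ j, N ≤ j → 16 * d (j + N) ≤ d j) (k : ℕ) :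
    ∑ j ∈ Finset.Ico N (N + k * N), (j : ℝ≥0∞) ^ 3 * d j ≤ 8 * N ^ 2 * ∑' j : ℕ, (j : ℝ≥0∞) * d j := by
  set A := ∑' j : ℕ, (j : ℝ≥0∞) * d j
  induction k with
  | zero => simp
  | succ k ih =>
    have hfirst : ∑ j ∈ Finset.Ico N (2 * N), (j : ℝ≥0∞) ^ 3 * d j ≤ 4 * N ^ 2 * A := by
      calc ∑ j ∈ Finset.Ico N (2 * N), (j : ℝ≥0∞) ^ 3 * d j
          ≤ ∑ j ∈ Finset.Ico N (2 * N), 4 * (N : ℝ≥0∞) ^ 2 * (j * d j) := by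
            refine Finset.sum_le_sum fun j hj => ?_
            have hj2 : j ≤ 2 * N := (Finset.mem_Ico.1 hj).2.le
            have hpow : j ^ 3 ≤ 4 * N ^ 2 * j := by
              calc j ^ 3 = j ^ 2 * j := by ring
                _ ≤ (2 * N) ^ 2 * j := by gcongr
                _ = 4 * N ^ 2 * j := by ring
            rw [← mul_assoc]
            gcongr
            exact_mod_cast hpow
        _ ≤ 4 * N ^ 2 * A := by
            rw [← Finset.mul_sum]
            gcongr
            exact ENNReal.sum_le_tsum _
    have hsecond : 2 * ∑ j ∈ Finset.Ico (2 * N) (N + (k + 1) * N), (j : ℝ≥0∞) ^ 3 * d j ≤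
        ∑ j ∈ Finset.Ico N (N + k * N), (j : ℝ≥0∞) ^ 3 * d j := by
      rw [show 2 * N = N + N by ring, show N + (k + 1) * N = (N + k * N) + N by ring,
        ← Finset.sum_Ico_add' (fun j : ℕ => (j : ℝ≥0∞) ^ 3 * d j), Finset.mul_sum]
      refine Finset.sum_le_sum fun j hj => ?_
      have hNj : N ≤ j := (Finset.mem_Ico.1 hj).1
      have hpow : (j + N) ^ 3 ≤ 8 * j ^ 3 := by
        calc (j + N) ^ 3 ≤ (j + j) ^ 3 := by gcongr
          _ = 8 * j ^ 3 := by ring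
      calc 2 * (((j + N : ℕ) : ℝ≥0∞) ^ 3 * d (j + N))
          ≤ 2 * ((8 * (j : ℝ≥0∞) ^ 3) * d (j + N)) := by
            gcongr
            exact_mod_cast hpow
        _ = (j : ℝ≥0∞) ^ 3 * (16 * d (j + N)) := by ring
        _ ≤ (j : ℝ≥0∞) ^ 3 * d j := by gcongr; exact hd j hNj
    rw [← Finset.sum_Ico_consecutive _ (show N ≤ 2 * N by omega)
      (show 2 * N ≤ N + (k + 1) * N by nlinarith [Nat.zero_le (k * N)])]
    refine (ENNReal.mul_le_mul_iff_right two_ne_zero ENNReal.ofNat_ne_top).1 ?_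
    calc _ = 2 * ∑ j ∈ Finset.Ico N (2 * N), (j : ℝ≥0∞) ^ 3 * d j +
          2 * ∑ j ∈ Finset.Ico (2 * N) (N + (k + 1) * N), (j : ℝ≥0∞) ^ 3 * d j := mul_add _ _ _
      _ ≤ 2 * (4 * N ^ 2 * A) + 8 * N ^ 2 * A := by
          exact add_le_add (mul_le_mul_right hfirst _) (hsecond.trans ih)
      _ = 2 * (8 * N ^ 2 * A) := by ring

theorem tsum_cube_mul_le {d : ℕ → ℝ≥0∞} {N : ℕ} (hN : 0 < N)
    (hd : ∀ j, N ≤ j → 16 * d (j + N) ≤ d j) :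
    ∑' j : ℕ, (j : ℝ≥0∞) ^ 3 * d j ≤ 9 * N ^ 2 * ∑' j : ℕ, (j : ℝ≥0∞) * d j := by
  refine ENNReal.tsum_le_of_sum_range_le fun m => ?_
  have hm : Finset.range m ⊆ Finset.range (N + m * N) := by
    rw [Finset.range_subset_range]
    nlinarith
  refine (Finset.sum_le_sum_of_subset hm).trans ?_
  rw [Finset.range_eq_Ico, ← Finset.sum_Ico_consecutive _ (Nat.zero_le N) (Nat.le_add_right N _)]
  have hfirst : ∑ j ∈ Finset.Ico 0 N, (j : ℝ≥0∞) ^ 3 * d j ≤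
      N ^ 2 * ∑' j : ℕ, (j : ℝ≥0∞) * d j := by
    calc ∑ j ∈ Finset.Ico 0 N, (j : ℝ≥0∞) ^ 3 * d j
        ≤ ∑ j ∈ Finset.Ico 0 N, (N : ℝ≥0∞) ^ 2 * (j * d j) := by
          refine Finset.sum_le_sum fun j hj => ?_
          have hjN : j ≤ N := (Finset.mem_Ico.1 hj).2.le
          rw [← mul_assoc, pow_succ]
          gcongr
      _ ≤ N ^ 2 * ∑' j : ℕ, (j : ℝ≥0∞) * d j := by
          rw [← Finset.mul_sum]
          gcongr
          exact ENNReal.sum_le_tsum _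
  refine (add_le_add hfirst (sum_Ico_cube_mul_le hd m)).trans (le_of_eq ?_)
  ring

/-- A measure on the line is log-concave if it satisfies the multiplicative Brunn–Minkowski
inequality. -/
def IsLogConcaveMeasure (μ : Measure ℝ) : Prop :=
  ∀ ⦃a b : ℝ⦄, 0 < a → 0 < b → a + b = 1 → ∀ ⦃A B C : Set ℝ⦄, MeasurableSet A → MeasurableSet B →
    MeasurableSet C → (∀ x ∈ A, ∀ y ∈ B, a * x + b * y ∈ C) → μ A ^ a * μ B ^ b ≤ μ C

theorem IsLogConcaveMeasure.map_neg {μ : Measure ℝ} (hμ : IsLogConcaveMeasure μ) :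
    IsLogConcaveMeasure (μ.map fun x => -x) := by
  intro a b ha hb hab A B C hA hB hC h
  rw [Measure.map_apply measurable_neg hA, Measure.map_apply measurable_neg hB,
    Measure.map_apply measurable_neg hC]
  refine hμ ha hb hab (measurable_neg hA) (measurable_neg hB) (measurable_neg hC)
    fun x hx y hy => ?_
  have := h (-x) hx (-y) hy
  rw [Set.mem_preimage]
  convert this using 1
  ring

/-- The interval of half-length `c` centred at `2 * s * c`. -/
def slab (c s : ℝ) : Set ℝ := Set.Ico ((2 * s - 1) * c) ((2 * s + 1) * c)

theorem measurableSet_slab (c s : ℝ) : MeasurableSet (slab c s) := measurableSet_Ico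

theorem IsLogConcaveMeasure.slab_le {μ : Measure ℝ} (hμ : IsLogConcaveMeasure μ) (c : ℝ)
    {a b s t u : ℝ} (ha : 0 ≤ a) (hb : 0 ≤ b) (hab : a + b = 1) (hu : a * s + b * t = u) :
    μ (slab c s) ^ a * μ (slab c t) ^ b ≤ μ (slab c u) := by
  rcases ha.eq_or_lt with rfl | ha
  · obtain rfl : b = 1 := by linarith
    obtain rfl : t = u := by linarith
    simp
  rcases hb.eq_or_lt with rfl | hb
  · obtain rfl : a = 1 := by linarith
    obtain rfl : s = u := by linarith
    simp
  refine hμ ha hb hab (measurableSet_slab c s) (measurableSet_slab c t) (measurableSet_slab c u) ?_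
  rintro x ⟨hx1, hx2⟩ y ⟨hy1, hy2⟩
  obtain rfl : b = 1 - a := by linarith
  subst hu
  constructor <;> nlinarith

theorem iUnion_slab {c : ℝ} (hc : 0 < c) : ⋃ j : ℕ, slab c ((j + 1 : ℕ) : ℝ) = Set.Ici c := by
  ext y
  simp only [Set.mem_iUnion, slab, Set.mem_Ico, Set.mem_Ici, Nat.cast_add, Nat.cast_one]
  constructor
  · rintro ⟨j, hj, -⟩
    have : (0 : ℝ) ≤ j := j.cast_nonneg
    nlinarith
  · intro hy
    have h0 : 0 ≤ (y - c) / (2 * c) := by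
      have := sub_nonneg.2 hy
      positivity
    refine ⟨⌊(y - c) / (2 * c)⌋₊, ?_, ?_⟩
    · have := Nat.floor_le h0
      rw [le_div_iff₀ (by positivity)] at this
      linarith
    · have := Nat.lt_floor_add_one ((y - c) / (2 * c))
      rw [div_lt_iff₀ (by positivity)] at this
      linarith

theorem pairwise_disjoint_slab {c : ℝ} (hc : 0 < c) :
    Pairwise (Function.onFun Disjoint fun j : ℕ => slab c ((j + 1 : ℕ) : ℝ)) := by
  have key : ∀ i j : ℕ, i < j → Disjoint (slab c ((i + 1 : ℕ) : ℝ)) (slab c ((j + 1 : ℕ) : ℝ)) := by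
    intro i j hij
    rw [Set.disjoint_left]
    rintro y ⟨-, hy⟩ ⟨hy', -⟩
    have hij' : (i : ℝ) + 1 ≤ j := by exact_mod_cast hij
    push_cast at hy hy'
    nlinarith
  intro i j hij
  rcases lt_or_gt_of_ne hij with h | h
  · exact key i j h
  · exact (key j i h).symm

theorem setLIntegral_Ici_eq_tsum_slab (μ : Measure ℝ) {c : ℝ} (hc : 0 < c) (f : ℝ → ℝ≥0∞) :
    ∫⁻ y in Set.Ici c, f y ∂μ = ∑' j : ℕ, ∫⁻ y in slab c ((j + 1 : ℕ) : ℝ), f y ∂μ := by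
  rw [← iUnion_slab hc, lintegral_iUnion (fun j => measurableSet_slab c _)
    (pairwise_disjoint_slab hc)]

theorem ofReal_mul_slab_le_setLIntegral (μ : Measure ℝ) (c s : ℝ) :
    ENNReal.ofReal ((2 * s - 1) * c) * μ (slab c s) ≤ ∫⁻ y in slab c s, ENNReal.ofReal y ∂μ := by
  rw [← setLIntegral_const]
  exact setLIntegral_mono' (measurableSet_slab c s) fun y hy => ENNReal.ofReal_le_ofReal hy.1

theorem tsum_mul_slab_le (μ : Measure ℝ) {c : ℝ} (hc : 0 < c) :
    ENNReal.ofReal c * ∑' j : ℕ, (j : ℝ≥0∞) * μ (slab c j) ≤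
      ∫⁻ y in Set.Ici c, ENNReal.ofReal y ∂μ := by
  rw [tsum_eq_zero_add' ENNReal.summable, setLIntegral_Ici_eq_tsum_slab μ hc, Nat.cast_zero,
    zero_mul, zero_add, ← ENNReal.tsum_mul_left]
  refine ENNReal.tsum_le_tsum fun j => le_trans ?_ (ofReal_mul_slab_le_setLIntegral μ c _)
  rw [← mul_assoc, ← ENNReal.ofReal_natCast, ← ENNReal.ofReal_mul hc.le]
  refine mul_le_mul_left (ENNReal.ofReal_le_ofReal ?_) _
  have : (0 : ℝ) ≤ j := j.cast_nonneg
  push_cast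
  nlinarith

theorem setLIntegral_cube_le_tsum (μ : Measure ℝ) {c : ℝ} (hc : 0 < c) :
    ∫⁻ y in Set.Ici c, ENNReal.ofReal (y ^ 3) ∂μ ≤
      ENNReal.ofReal (27 * c ^ 3) * ∑' j : ℕ, (j : ℝ≥0∞) ^ 3 * μ (slab c j) := by
  rw [tsum_eq_zero_add' (f := fun j : ℕ => (j : ℝ≥0∞) ^ 3 * μ (slab c j)) ENNReal.summable,
    setLIntegral_Ici_eq_tsum_slab μ hc, Nat.cast_zero, zero_pow three_ne_zero, zero_mul, zero_add,
    ← ENNReal.tsum_mul_left]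
  refine ENNReal.tsum_le_tsum fun j => ?_
  rw [← mul_assoc, ← ENNReal.ofReal_natCast, ← ENNReal.ofReal_pow (by positivity),
    ← ENNReal.ofReal_mul (by positivity), ← setLIntegral_const]
  refine setLIntegral_mono' (measurableSet_slab c _) fun y hy => ENNReal.ofReal_le_ofReal ?_
  obtain ⟨h1, h2⟩ := hy
  have : (0 : ℝ) ≤ j := j.cast_nonneg
  push_cast at h1 h2 ⊢
  have hy0 : 0 ≤ y := le_trans (by nlinarith) h1
  calc y ^ 3 ≤ (3 * ((j : ℝ) + 1) * c) ^ 3 := by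
        gcongr
        nlinarith
    _ = 27 * c ^ 3 * ((j : ℝ) + 1) ^ 3 := by ring

theorem sum_range_odd (N : ℕ) : ∑ j ∈ Finset.range N, (2 * ((j + 1 : ℕ) : ℝ) - 1) = (N : ℝ) ^ 2 := by
  induction N with
  | zero => simp
  | succ N ih =>
    rw [Finset.sum_range_succ, ih]
    push_cast
    ring

/-- If the first moment is small compared with the mass around the origin, then the slab at
position `N` has small mass. -/
theorem IsLogConcaveMeasure.slab_decay {μ : Measure ℝ} (hμ : IsLogConcaveMeasure μ) {c : ℝ}
    (hc : 0 < c) {N : ℕ} (hN : 0 < N)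
    (H : 16 * ∫⁻ y in Set.Ici c, ENNReal.ofReal y ∂μ <
      ENNReal.ofReal ((N : ℝ) ^ 2 * c) * μ (slab c 0)) :
    16 * μ (slab c N) ≤ μ (slab c 0) := by
  by_contra! hlt
  refine H.not_ge ?_
  have hN' : (0 : ℝ) < N := by exact_mod_cast hN
  have hmin : ∀ j : ℕ, j ≤ N → μ (slab c 0) ≤ 16 * μ (slab c j) := by
    intro j hj
    have hj' : (j : ℝ) ≤ N := by exact_mod_cast hj
    set m := min (μ (slab c 0)) (μ (slab c N)) with hm
    have hm16 : μ (slab c 0) ≤ 16 * m := by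
      rw [hm, mul_min]
      refine le_min ?_ hlt.le
      exact le_mul_of_one_le_left (zero_le) (by norm_num)
    refine hm16.trans (mul_le_mul_right ?_ _)
    have ha : 0 ≤ 1 - (j : ℝ) / N := by
      rw [sub_nonneg, div_le_one hN']
      exact hj'
    have hb : 0 ≤ (j : ℝ) / N := by positivity
    refine le_trans ?_ (hμ.slab_le c (s := 0) (t := N) ha hb (by ring) (by field_simp; ring))
    calc m = m ^ (1 - (j : ℝ) / N) * m ^ ((j : ℝ) / N) := by
          rw [← ENNReal.rpow_add_of_nonneg _ _ ha hb, sub_add_cancel, ENNReal.rpow_one]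
      _ ≤ _ := by
          gcongr
          · exact min_le_left _ _
          · exact min_le_right _ _
  rw [setLIntegral_Ici_eq_tsum_slab μ hc]
  calc ENNReal.ofReal ((N : ℝ) ^ 2 * c) * μ (slab c 0)
      = ∑ j ∈ Finset.range N, ENNReal.ofReal ((2 * ((j + 1 : ℕ) : ℝ) - 1) * c) * μ (slab c 0) := by
        rw [← Finset.sum_mul, ← ENNReal.ofReal_sum_of_nonneg, ← Finset.sum_mul, sum_range_odd]
        intro j _
        have : (0 : ℝ) ≤ j := j.cast_nonneg
        push_cast
        nlinarith
    _ ≤ ∑ j ∈ Finset.range N, 16 * ∫⁻ y in slab c ((j + 1 : ℕ) : ℝ), ENNReal.ofReal y ∂μ := by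
        refine Finset.sum_le_sum fun j hj => ?_
        calc _ ≤ ENNReal.ofReal ((2 * ((j + 1 : ℕ) : ℝ) - 1) * c) *
              (16 * μ (slab c ((j + 1 : ℕ) : ℝ))) := by
              gcongr
              exact hmin (j + 1) (Finset.mem_range.1 hj)
          _ = 16 * (ENNReal.ofReal ((2 * ((j + 1 : ℕ) : ℝ) - 1) * c) *
              μ (slab c ((j + 1 : ℕ) : ℝ))) := by ring
          _ ≤ _ := by
              gcongr
              exact ofReal_mul_slab_le_setLIntegral μ c _
    _ ≤ _ := by
        rw [← Finset.mul_sum]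
        gcongr
        exact ENNReal.sum_le_tsum _

theorem IsLogConcaveMeasure.slab_add_mul_le {μ : Measure ℝ} (hμ : IsLogConcaveMeasure μ) (c : ℝ)
    {s t : ℝ} (hs : 0 < s) (ht : 0 < t) :
    μ (slab c (s + t)) * μ (slab c 0) ≤ μ (slab c s) * μ (slab c t) := by
  set x := μ (slab c (s + t))
  set y := μ (slab c 0)
  have hα : 0 ≤ t / (s + t) := by positivity
  have hβ : 0 ≤ s / (s + t) := by positivity
  have hsum : t / (s + t) + s / (s + t) = 1 := by field_simp; ring
  have h1 : y ^ (t / (s + t)) * x ^ (s / (s + t)) ≤ μ (slab c s) :=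
    hμ.slab_le c hα hβ hsum (by field_simp; ring)
  have h2 : y ^ (s / (s + t)) * x ^ (t / (s + t)) ≤ μ (slab c t) :=
    hμ.slab_le c hβ hα (by rw [add_comm, hsum]) (by field_simp; ring)
  refine le_trans (le_of_eq ?_) (mul_le_mul' h1 h2)
  calc x * y = x ^ (t / (s + t) + s / (s + t)) * y ^ (t / (s + t) + s / (s + t)) := by
        rw [hsum, ENNReal.rpow_one, ENNReal.rpow_one]
    _ = _ := by
        rw [ENNReal.rpow_add_of_nonneg _ _ hα hβ, ENNReal.rpow_add_of_nonneg _ _ hα hβ]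
        ring

theorem IsLogConcaveMeasure.setLIntegral_cube_le {μ : Measure ℝ} [IsFiniteMeasure μ]
    (hμ : IsLogConcaveMeasure μ) {c : ℝ} (hc : 0 < c) {N : ℕ} (hN : 0 < N)
    (H : 16 * ∫⁻ y in Set.Ici c, ENNReal.ofReal y ∂μ <
      ENNReal.ofReal ((N : ℝ) ^ 2 * c) * μ (slab c 0)) :
    ∫⁻ y in Set.Ici c, ENNReal.ofReal (y ^ 3) ∂μ ≤
      ENNReal.ofReal (243 * (N : ℝ) ^ 2 * c ^ 2) * ∫⁻ y in Set.Ici c, ENNReal.ofReal y ∂μ := by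
  have hdecay := hμ.slab_decay hc hN H
  have h0 : μ (slab c 0) ≠ 0 := by
    intro h0
    simp [h0] at H
  have hd : ∀ j : ℕ, N ≤ j → 16 * μ (slab c ((j + N : ℕ) : ℝ)) ≤ μ (slab c j) := by
    intro j hj
    refine (ENNReal.mul_le_mul_iff_left h0 (measure_ne_top μ _)).1 ?_
    have hj0 : (0 : ℝ) < j := by exact_mod_cast hN.trans_le hj
    have := hμ.slab_add_mul_le c hj0 (show (0 : ℝ) < N by exact_mod_cast hN)
    push_cast
    calc 16 * μ (slab c (j + N)) * μ (slab c 0)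
        = 16 * (μ (slab c (j + N)) * μ (slab c 0)) := by ring
      _ ≤ 16 * (μ (slab c j) * μ (slab c N)) := by gcongr
      _ = μ (slab c j) * (16 * μ (slab c N)) := by ring
      _ ≤ _ := by gcongr
  have hconst : ENNReal.ofReal (27 * c ^ 3) * (9 * (N : ℝ≥0∞) ^ 2) =
      ENNReal.ofReal (243 * (N : ℝ) ^ 2 * c ^ 2) * ENNReal.ofReal c := by
    rw [show (9 : ℝ≥0∞) * N ^ 2 = ENNReal.ofReal (9 * (N : ℝ) ^ 2) by
        rw [ENNReal.ofReal_mul (by norm_num), ENNReal.ofReal_pow (by positivity)]; simp,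
      ← ENNReal.ofReal_mul (by positivity), ← ENNReal.ofReal_mul (by positivity)]
    congr 1
    ring
  refine (setLIntegral_cube_le_tsum μ hc).trans ?_
  calc ENNReal.ofReal (27 * c ^ 3) * ∑' j : ℕ, (j : ℝ≥0∞) ^ 3 * μ (slab c j)
      ≤ ENNReal.ofReal (27 * c ^ 3) * (9 * N ^ 2 * ∑' j : ℕ, (j : ℝ≥0∞) * μ (slab c j)) := by
        gcongr
        exact tsum_cube_mul_le hN hd
    _ = ENNReal.ofReal (243 * (N : ℝ) ^ 2 * c ^ 2) *
          (ENNReal.ofReal c * ∑' j : ℕ, (j : ℝ≥0∞) * μ (slab c j)) := by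
        rw [← mul_assoc, hconst, mul_assoc]
    _ ≤ _ := by
        gcongr
        exact tsum_mul_slab_le μ hc

theorem half_le_measure_slab_zero {P : Measure ℝ} [IsProbabilityMeasure P] {c : ℝ} (hc : 0 < c)
    (ha : ∫⁻ y, ENNReal.ofReal |y| ∂P ≤ ENNReal.ofReal (c / 2)) :
    ENNReal.ofReal (1 / 2) ≤ P (slab c 0) := by
  have hcompl : P (slab c 0)ᶜ ≤ ENNReal.ofReal (1 / 2) := by
    have hsub : (slab c 0)ᶜ ⊆ {y | ENNReal.ofReal c ≤ ENNReal.ofReal |y|} := by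
      intro y hy
      refine ENNReal.ofReal_le_ofReal ?_
      by_contra! hlt
      rw [abs_lt] at hlt
      exact hy ⟨by linarith, by linarith⟩
    have hmarkov := mul_meas_ge_le_lintegral (μ := P) (f := fun y => ENNReal.ofReal |y|)
      (by fun_prop) (ENNReal.ofReal c)
    have hc0 : ENNReal.ofReal c ≠ 0 := by simpa using hc
    refine (ENNReal.mul_le_mul_iff_right hc0 ENNReal.ofReal_ne_top).1 ?_
    calc ENNReal.ofReal c * P (slab c 0)ᶜ ≤ _ := mul_le_mul_right (measure_mono hsub) _
      _ ≤ ENNReal.ofReal (c / 2) := hmarkov.trans ha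
      _ = ENNReal.ofReal c * ENNReal.ofReal (1 / 2) := by
          rw [← ENNReal.ofReal_mul hc.le]; congr 1; ring
  have hsum := measure_add_measure_compl (μ := P) (measurableSet_slab c 0)
  rw [measure_univ] at hsum
  have h1 : ENNReal.ofReal (1 / 2) + ENNReal.ofReal (1 / 2) = 1 := by
    rw [← ENNReal.ofReal_add (by norm_num) (by norm_num)]; norm_num
  refine (ENNReal.add_le_add_iff_right (a := ENNReal.ofReal (1 / 2)) ENNReal.ofReal_ne_top).1 ?_
  rw [h1, ← hsum]
  gcongr

theorem setLIntegral_cube_le_of_lintegral_abs_lt {P μ : Measure ℝ} [IsProbabilityMeasure P]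
    {ε : ℝ} (hε : 0 < ε) (hε2 : ε < 1 / 2) (hPμ : P ≤ ENNReal.ofReal (1 / ε) • μ)
    (hμP : ENNReal.ofReal ε • μ ≤ P) (hμ : IsLogConcaveMeasure μ)
    (ha : ∫⁻ y, ENNReal.ofReal |y| ∂P < ENNReal.ofReal (ε / 40)) :
    ∫⁻ y in Set.Ici (ε / 20), ENNReal.ofReal (y ^ 3) ∂P ≤ ENNReal.ofReal (1 / ε) := by
  have hε0 : ENNReal.ofReal ε ≠ 0 := by simpa using hε
  have hc : 0 < ε / 20 := by positivity
  set c := ε / 20 with hcdef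
  have : IsFiniteMeasure μ := by
    refine ⟨?_⟩
    have h := hμP Set.univ
    rw [Measure.smul_apply, smul_eq_mul, measure_univ (μ := P)] at h
    exact ENNReal.lt_top_of_mul_ne_top_right (h.trans_lt ENNReal.one_lt_top).ne hε0
  set b := ∫⁻ y in Set.Ici c, ENNReal.ofReal y ∂μ with hb
  have hb40 : b < ENNReal.ofReal (1 / 40) := by
    refine lt_of_mul_lt_mul_left' (a := ENNReal.ofReal ε) ?_
    rw [← ENNReal.ofReal_mul hε.le, mul_one_div]
    refine lt_of_le_of_lt ?_ ha
    rw [hb, ← smul_eq_mul, ← lintegral_smul_measure, ← Measure.restrict_smul]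
    calc ∫⁻ y in Set.Ici c, ENNReal.ofReal y ∂(ENNReal.ofReal ε • μ)
        ≤ ∫⁻ y, ENNReal.ofReal y ∂(ENNReal.ofReal ε • μ) := setLIntegral_le_lintegral _ _
      _ ≤ ∫⁻ y, ENNReal.ofReal |y| ∂P :=
          lintegral_mono' hμP fun y => ENNReal.ofReal_le_ofReal (le_abs_self y)
  have hd0 : ENNReal.ofReal (ε / 2) ≤ μ (slab c 0) := by
    have h := (half_le_measure_slab_zero hc (ha.le.trans_eq (by rw [hcdef]; congr 1; ring))).trans
      (hPμ (slab c 0))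
    rw [Measure.smul_apply, smul_eq_mul] at h
    calc ENNReal.ofReal (ε / 2) = ENNReal.ofReal ε * ENNReal.ofReal (1 / 2) := by
          rw [← ENNReal.ofReal_mul hε.le]; congr 1; ring
      _ ≤ ENNReal.ofReal ε * (ENNReal.ofReal (1 / ε) * μ (slab c 0)) := mul_le_mul_right h _
      _ = μ (slab c 0) := by
          rw [← mul_assoc, ← ENNReal.ofReal_mul hε.le, mul_one_div_cancel hε.ne',
            ENNReal.ofReal_one, one_mul]
  set N := ⌈4 / ε⌉₊
  have hN1 : 4 / ε ≤ N := Nat.le_ceil _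
  have hN2 : (N : ℝ) < 4 / ε + 1 := Nat.ceil_lt_add_one (by positivity)
  have hN : 0 < N := Nat.ceil_pos.2 (by positivity)
  have hNε : 4 ≤ N * ε := (div_le_iff₀ hε).1 hN1
  have hNε2 : N * ε ≤ 5 := by
    have h : N * ε < (4 / ε + 1) * ε := mul_lt_mul_of_pos_right hN2 hε
    rw [add_mul, div_mul_cancel₀ _ hε.ne'] at h
    linarith
  have H : 16 * b < ENNReal.ofReal ((N : ℝ) ^ 2 * c) * μ (slab c 0) := by
    calc 16 * b < 16 * ENNReal.ofReal (1 / 40) :=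
          ENNReal.mul_lt_mul_right (by norm_num) (by norm_num) hb40
      _ = ENNReal.ofReal (16 * (1 / 40)) := by
          rw [ENNReal.ofReal_mul (by norm_num)]; simp
      _ ≤ ENNReal.ofReal ((N : ℝ) ^ 2 * c * (ε / 2)) := by
          refine ENNReal.ofReal_le_ofReal ?_
          have : (N : ℝ) ^ 2 * c * (ε / 2) = (N * ε) ^ 2 / 40 := by rw [hcdef]; ring
          rw [this]
          nlinarith
      _ ≤ _ := by
          rw [ENNReal.ofReal_mul (by positivity)]
          gcongr
  have hcube := hμ.setLIntegral_cube_le hc hN H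
  calc ∫⁻ y in Set.Ici c, ENNReal.ofReal (y ^ 3) ∂P
      ≤ ∫⁻ y in Set.Ici c, ENNReal.ofReal (y ^ 3) ∂(ENNReal.ofReal (1 / ε) • μ) :=
        lintegral_mono' (Measure.restrict_mono subset_rfl hPμ) le_rfl
    _ = ENNReal.ofReal (1 / ε) * ∫⁻ y in Set.Ici c, ENNReal.ofReal (y ^ 3) ∂μ := by
        rw [Measure.restrict_smul, lintegral_smul_measure, smul_eq_mul]
    _ ≤ ENNReal.ofReal (1 / ε) *
          (ENNReal.ofReal (243 * (N : ℝ) ^ 2 * c ^ 2) * ENNReal.ofReal (1 / 40)) := by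
        gcongr
        exact hcube.trans (mul_le_mul_right hb40.le _)
    _ ≤ ENNReal.ofReal (1 / ε) * ENNReal.ofReal 1 := by
        rw [← ENNReal.ofReal_mul (by positivity)]
        gcongr
        have : 243 * (N : ℝ) ^ 2 * c ^ 2 * (1 / 40) = 243 / 16000 * (N * ε) ^ 2 := by
          rw [hcdef]; ring
        rw [this]
        nlinarith
    _ = _ := by simp

/-- A unit-variance measure comparable with a log-concave measure cannot have a small first
absolute moment. -/
theorem ofReal_le_lintegral_abs {P μ : Measure ℝ} [IsProbabilityMeasure P]
    {ε : ℝ} (hε : 0 < ε) (hε2 : ε < 1 / 2) (hPμ : P ≤ ENNReal.ofReal (1 / ε) • μ)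
    (hμP : ENNReal.ofReal ε • μ ≤ P) (hμ : IsLogConcaveMeasure μ)
    (hvar : 1 ≤ ∫⁻ y, ENNReal.ofReal (y ^ 2) ∂P) :
    ENNReal.ofReal (ε / 40) ≤ ∫⁻ y, ENNReal.ofReal |y| ∂P := by
  by_contra! ha
  have hpos := setLIntegral_cube_le_of_lintegral_abs_lt hε hε2 hPμ hμP hμ ha
  have : IsProbabilityMeasure (P.map fun y => -y) :=
    Measure.isProbabilityMeasure_map measurable_neg.aemeasurable
  have hneg := setLIntegral_cube_le_of_lintegral_abs_lt (P := P.map fun y => -y)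
    (μ := μ.map fun y => -y) hε hε2
    ((Measure.map_mono hPμ measurable_neg).trans_eq (Measure.map_smul _ _ _))
    ((Measure.map_smul _ _ _).symm.trans_le (Measure.map_mono hμP measurable_neg)) hμ.map_neg
    (by
      rw [lintegral_map (by fun_prop) measurable_neg]
      simpa using ha)
  rw [setLIntegral_map measurableSet_Ici (by fun_prop) measurable_neg] at hneg
  set c := ε / 20 with hc
  have hpt : ∀ y : ℝ, ENNReal.ofReal (y ^ 2) ≤ ENNReal.ofReal (10 / ε) * ENNReal.ofReal |y| +
      (ENNReal.ofReal (ε / 10) * (Set.Ici c).indicator (fun y => ENNReal.ofReal (y ^ 3)) y +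
      ENNReal.ofReal (ε / 10) * ((fun y => -y) ⁻¹' Set.Ici c).indicator
        (fun y => ENNReal.ofReal ((-y) ^ 3)) y) := by
    intro y
    have hlarge : ∀ z : ℝ, 0 ≤ z → z ^ 2 ≤ 10 / ε * z + ε / 10 * z ^ 3 := by
      intro z hz
      have h : 10 / ε * z + ε / 10 * z ^ 3 - z ^ 2 =
          z * (10 / ε + ε / 10 * z ^ 2 - z) := by ring
      have h' : 10 / ε + ε / 10 * z ^ 2 - z =
          ε / 10 * ((z - 5 / ε) ^ 2 + 75 / ε ^ 2) := by field_simp; ring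
      have : 0 ≤ 10 / ε * z + ε / 10 * z ^ 3 - z ^ 2 := by
        rw [h, h']; positivity
      linarith
    by_cases h1 : c ≤ y
    · have hy0 : 0 ≤ y := le_trans (by positivity) h1
      rw [Set.indicator_of_mem (show y ∈ Set.Ici c from h1), abs_of_nonneg hy0]
      refine le_trans ?_ (add_le_add_right (le_add_right le_rfl) _)
      rw [← ENNReal.ofReal_mul (by positivity), ← ENNReal.ofReal_mul (by positivity),
        ← ENNReal.ofReal_add (by positivity) (by positivity)]
      exact ENNReal.ofReal_le_ofReal (hlarge y hy0)
    by_cases h2 : c ≤ -y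
    · have hy0 : 0 ≤ -y := le_trans (by positivity) h2
      rw [Set.indicator_of_mem (show y ∈ (fun y => -y) ⁻¹' Set.Ici c from h2), ← abs_neg,
        abs_of_nonneg hy0]
      refine le_trans ?_ (add_le_add_right (le_add_left le_rfl) _)
      rw [← ENNReal.ofReal_mul (by positivity), ← ENNReal.ofReal_mul (by positivity),
        ← ENNReal.ofReal_add (by positivity) (by positivity), ← neg_sq]
      exact ENNReal.ofReal_le_ofReal (hlarge (-y) hy0)
    · refine le_add_right ?_
      rw [← ENNReal.ofReal_mul (by positivity)]
      refine ENNReal.ofReal_le_ofReal ?_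
      rw [← sq_abs, sq]
      gcongr
      have h3 : |y| ≤ c := abs_le.2 ⟨by linarith, by linarith⟩
      refine h3.trans ?_
      rw [hc, div_le_div_iff₀ (by norm_num) hε]
      nlinarith
  have hfin : ∫⁻ y, ENNReal.ofReal (y ^ 2) ∂P ≤
      ENNReal.ofReal (10 / ε) * ENNReal.ofReal (ε / 40) +
      (ENNReal.ofReal (ε / 10) * ENNReal.ofReal (1 / ε) +
      ENNReal.ofReal (ε / 10) * ENNReal.ofReal (1 / ε)) := by
    have hm1 : Measurable fun y : ℝ => (Set.Ici c).indicator (fun y => ENNReal.ofReal (y ^ 3)) y :=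
      Measurable.indicator (by fun_prop) measurableSet_Ici
    have hm2 : Measurable fun y : ℝ => ((fun y => -y) ⁻¹' Set.Ici c).indicator
        (fun y => ENNReal.ofReal ((-y) ^ 3)) y :=
      Measurable.indicator (by fun_prop) (measurable_neg measurableSet_Ici)
    refine (lintegral_mono hpt).trans ?_
    rw [lintegral_add_left (by fun_prop), lintegral_add_left (hm1.const_mul _),
      lintegral_const_mul _ (by fun_prop), lintegral_const_mul _ hm1, lintegral_const_mul _ hm2,
      lintegral_indicator measurableSet_Ici,
      lintegral_indicator (measurable_neg measurableSet_Ici)]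
    gcongr
  refine (hvar.trans hfin).not_gt ?_
  rw [← ENNReal.ofReal_mul (by positivity), ← ENNReal.ofReal_mul (by positivity),
    ← ENNReal.ofReal_add (by positivity) (by positivity),
    ← ENNReal.ofReal_add (by positivity) (by positivity), ENNReal.ofReal_lt_one]
  have h1 : 10 / ε * (ε / 40) = 1 / 4 := by field_simp; norm_num
  have h2 : ε / 10 * (1 / ε) = 1 / 10 := by field_simp
  rw [h1, h2]
  norm_num

section Marginals

theorem IsLogConcave.convex_pos {E : Type*} [AddCommGroup E] [Module ℝ E] {g : E → ℝ}
    (hg : IsLogConcave g) : Convex ℝ {x | 0 < g x} := by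
  intro x hx y hy a b ha hb hab
  exact (mul_pos (rpow_pos_of_pos hx a) (rpow_pos_of_pos hy b)).trans_le (hg.2 x y a b ha hb hab)

theorem IsLogConcave.concaveOn_log {E : Type*} [AddCommGroup E] [Module ℝ E] {g : E → ℝ}
    (hg : IsLogConcave g) : ConcaveOn ℝ {x | 0 < g x} fun x => log (g x) := by
  refine ⟨hg.convex_pos, fun x hx y hy a b ha hb hab => ?_⟩
  have hgx : 0 < g x := hx
  have hgy : 0 < g y := hy
  have hxa := rpow_pos_of_pos hgx a
  have hyb := rpow_pos_of_pos hgy b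
  have h := log_le_log (mul_pos hxa hyb) (hg.2 x y a b ha hb hab)
  rwa [log_mul hxa.ne' hyb.ne', log_rpow hgx, log_rpow hgy] at h

/-- A log-concave function agrees almost everywhere with a measurable log-concave function. -/
theorem IsLogConcave.exists_measurable_ae_eq {E : Type*} [NormedAddCommGroup E]
    [NormedSpace ℝ E] [FiniteDimensional ℝ E] [MeasurableSpace E] [BorelSpace E]
    (μ : Measure E) [μ.IsAddHaarMeasure] {g : E → ℝ} (hg : IsLogConcave g) :
    ∃ g' : E → ℝ, Measurable g' ∧ (∀ x, 0 ≤ g' x) ∧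
      (∀ x y : E, ∀ a b : ℝ, 0 < a → 0 < b → a + b = 1 →
        g' x ^ a * g' y ^ b ≤ g' (a • x + b • y)) ∧ g' =ᵐ[μ] g := by
  classical
  set S := interior {x | 0 < g x} with hS
  have hnonneg (x) : 0 ≤ S.piecewise g (fun _ => 0) x := by
    by_cases hx : x ∈ S <;> simp [hx, hg.1 x]
  refine ⟨S.piecewise g fun _ => 0, ?_, hnonneg, ?_, ?_⟩
  · refine ContinuousOn.measurable_piecewise ?_ continuousOn_const isOpen_interior.measurableSet
    refine (hg.concaveOn_log.continuousOn_interior.rexp).congr fun x hx => ?_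
    have hx' : x ∈ {x | 0 < g x} := interior_subset hx
    exact (exp_log hx').symm
  · intro x y a b ha hb hab
    by_cases hx : x ∈ S
    · by_cases hy : y ∈ S
      · have hxy : a • x + b • y ∈ S := hg.convex_pos.interior hx hy ha.le hb.le hab
        simpa [hx, hy, hxy] using hg.2 x y a b ha.le hb.le hab
      · simpa [hy, zero_rpow hb.ne'] using hnonneg (a • x + b • y)
    · simpa [hx, zero_rpow ha.ne'] using hnonneg (a • x + b • y)
  · have hnull : ∀ᵐ x ∂μ, x ∉ frontier {x | 0 < g x} :=
      measure_eq_zero_iff_ae_notMem.1 (hg.convex_pos.addHaar_frontier μ)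
    filter_upwards [hnull] with x hx
    by_cases hxS : x ∈ S
    · simp [hxS]
    · have : ¬ 0 < g x := fun h => hx ⟨subset_closure h, hxS⟩
      simp [hxS, le_antisymm (not_lt.1 this) (hg.1 x)]

/-- One-dimensional marginals of a log-concave density are log-concave measures. -/
theorem isLogConcaveMeasure_map_withDensity {n : ℕ} {g : EuclideanSpace ℝ (Fin n) → ℝ}
    (hgm : Measurable g) (hg0 : ∀ x, 0 ≤ g x)
    (hg : ∀ x y : EuclideanSpace ℝ (Fin n), ∀ a b : ℝ, 0 < a → 0 < b → a + b = 1 →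
      g x ^ a * g y ^ b ≤ g (a • x + b • y)) (l : EuclideanSpace ℝ (Fin n) →L[ℝ] ℝ) :
    IsLogConcaveMeasure ((volume.withDensity fun x => ENNReal.ofReal (g x)).map l) := by
  intro a b ha hb hab A B C hA hB hC hABC
  have hl : Measurable l := l.continuous.measurable
  have hG : Measurable fun x => ENNReal.ofReal (g x) := hgm.ennreal_ofReal
  have key (D : Set ℝ) (hD : MeasurableSet D) :
      (volume.withDensity fun x => ENNReal.ofReal (g x)).map l D =
        ∫⁻ x, (l ⁻¹' D).indicator (fun x => ENNReal.ofReal (g x)) x := by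
    rw [Measure.map_apply hl hD, withDensity_apply _ (hl hD), lintegral_indicator (hl hD)]
  rw [key A hA, key B hB, key C hC]
  refine prekopaLeindler_euclideanSpace ha hb hab n _ _ _ (hG.indicator (hl hA))
    (hG.indicator (hl hB)) (hG.indicator (hl hC)) fun x y => ?_
  by_cases hx : x ∈ l ⁻¹' A
  · by_cases hy : y ∈ l ⁻¹' B
    · have hxy : a • x + b • y ∈ l ⁻¹' C := by simpa using hABC _ hx _ hy
      rw [Set.indicator_of_mem hx, Set.indicator_of_mem hy, Set.indicator_of_mem hxy,
        ENNReal.ofReal_rpow_of_nonneg (hg0 x) ha.le, ENNReal.ofReal_rpow_of_nonneg (hg0 y) hb.le,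
        ← ENNReal.ofReal_mul (rpow_nonneg (hg0 x) a)]
      exact ENNReal.ofReal_le_ofReal (hg x y a b ha hb hab)
    · simp [Set.indicator_of_notMem hy, ENNReal.zero_rpow_of_pos hb]
  · simp [Set.indicator_of_notMem hx, ENNReal.zero_rpow_of_pos ha]

/-- First absolute moments of the marginals of an approximately log-concave density with unit
second moment in the given direction. -/
theorem ApproxLogConcave.le_integral_abs {n : ℕ} {ε : ℝ} (hε : 0 < ε) (hε2 : ε < 1 / 2)
    {p : EuclideanSpace ℝ (Fin n) → ℝ} (hp0 : ∀ x, 0 ≤ p x) (hp : Integrable p)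
    (hp1 : ∫ x, p x = 1) (hplc : ApproxLogConcave ε p) (l : EuclideanSpace ℝ (Fin n) →L[ℝ] ℝ)
    (hint : Integrable fun x => |l x| * p x) (hint2 : Integrable fun x => l x ^ 2 * p x)
    (hl : ∫ x, l x ^ 2 * p x = 1) :
    ε / 40 ≤ ∫ x, |l x| * p x := by
  obtain ⟨g, hg, hgp⟩ := hplc
  obtain ⟨g', hgm, hg0, hglc, hae⟩ := hg.exists_measurable_ae_eq volume
  have hlm : Measurable l := l.continuous.measurable
  set P : Measure (EuclideanSpace ℝ (Fin n)) := volume.withDensity fun x => ENNReal.ofReal (p x)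
  set μ : Measure (EuclideanSpace ℝ (Fin n)) := volume.withDensity fun x => ENNReal.ofReal (g' x)
  have hPprob : IsProbabilityMeasure P := ⟨by
    rw [withDensity_apply _ .univ, Measure.restrict_univ,
      ← ofReal_integral_eq_lintegral_ofReal hp (ae_of_all _ hp0), hp1, ENNReal.ofReal_one]⟩
  have := Measure.isProbabilityMeasure_map (μ := P) hlm.aemeasurable
  have hPμ : P ≤ ENNReal.ofReal (1 / ε) • μ := by
    rw [← withDensity_smul _ hgm.ennreal_ofReal]
    refine withDensity_mono ?_
    filter_upwards [hae] with x hx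
    rw [Pi.smul_apply, smul_eq_mul, ← ENNReal.ofReal_mul (by positivity), hx]
    exact ENNReal.ofReal_le_ofReal (hgp x).2
  have hμP : ENNReal.ofReal ε • μ ≤ P := by
    rw [← withDensity_smul _ hgm.ennreal_ofReal]
    refine withDensity_mono ?_
    filter_upwards [hae] with x hx
    rw [Pi.smul_apply, smul_eq_mul, ← ENNReal.ofReal_mul hε.le, hx]
    exact ENNReal.ofReal_le_ofReal (hgp x).1
  have key {f : ℝ → ℝ} (hf : Measurable f) (hf0 : ∀ y, 0 ≤ f y)
      (hfi : Integrable fun x => f (l x) * p x) :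
      ∫⁻ y, ENNReal.ofReal (f y) ∂(P.map l) = ENNReal.ofReal (∫ x, f (l x) * p x) := by
    rw [lintegral_map hf.ennreal_ofReal hlm,
      lintegral_withDensity_eq_lintegral_mul₀ hp.aemeasurable.ennreal_ofReal
        (g := fun x => ENNReal.ofReal (f (l x))) (hf.comp hlm).ennreal_ofReal.aemeasurable,
      ofReal_integral_eq_lintegral_ofReal hfi
        (ae_of_all _ fun x => mul_nonneg (hf0 _) (hp0 x))]
    refine lintegral_congr fun x => ?_
    rw [Pi.mul_apply, mul_comm, ← ENNReal.ofReal_mul (hf0 _)]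
  have h := ofReal_le_lintegral_abs hε hε2
    (P := P.map l) (μ := μ.map l)
    (by rw [← Measure.map_smul]; exact Measure.map_mono hPμ hlm)
    (by rw [← Measure.map_smul]; exact Measure.map_mono hμP hlm)
    (isLogConcaveMeasure_map_withDensity hgm hg0 hglc l)
    (by rw [key (f := fun y => y ^ 2) (by fun_prop) sq_nonneg hint2, hl, ENNReal.ofReal_one])
  rw [key (f := fun y => |y|) (by fun_prop) abs_nonneg hint] at h
  refine (ENNReal.ofReal_le_ofReal_iff ?_).1 h
  exact integral_nonneg fun x => mul_nonneg (abs_nonneg _) (hp0 x)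

end Marginals

section Isotropic

variable {n : ℕ} {p : EuclideanSpace ℝ (Fin n) → ℝ}

theorem integrable_sq_mul_of_densCov_eq_one (hmean : densMean n p = 0) (hcov : densCov n p = 1)
    (i : Fin n) : Integrable fun x => p x * (x i * x i) := by
  refine Integrable.of_integral_ne_zero ?_
  have h := congrFun (congrFun hcov i) i
  simp only [densCov, hmean, Matrix.of_apply, PiLp.zero_apply, sub_zero, Matrix.one_apply_eq] at h
  rw [h]
  exact one_ne_zero

theorem integrable_norm_sq_mul_of_densCov_eq_one (hmean : densMean n p = 0)
    (hcov : densCov n p = 1) : Integrable fun x => ‖x‖ ^ 2 * p x := by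
  refine (integrable_finsetSum Finset.univ fun i _ =>
    integrable_sq_mul_of_densCov_eq_one hmean hcov i).congr (ae_of_all _ fun x => ?_)
  simp only [EuclideanSpace.real_norm_sq_eq, Finset.sum_mul]
  exact Finset.sum_congr rfl fun i _ => by ring

theorem integrable_norm_mul_of_integrable_norm_sq_mul (hp0 : ∀ x, 0 ≤ p x) (hp : Integrable p)
    (h2 : Integrable fun x => ‖x‖ ^ 2 * p x) : Integrable fun x => ‖x‖ * p x := by
  refine (hp.add h2).mono' (continuous_norm.aestronglyMeasurable.mul hp.aestronglyMeasurable)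
    (ae_of_all _ fun x => ?_)
  rw [norm_of_nonneg (mul_nonneg (norm_nonneg x) (hp0 x)), Pi.add_apply]
  nlinarith [mul_nonneg (sq_nonneg (‖x‖ - 1)) (hp0 x), hp0 x, mul_nonneg (norm_nonneg x) (hp0 x),
    mul_nonneg (sq_nonneg ‖x‖) (hp0 x)]

theorem integrable_clm_mul (hp0 : ∀ x, 0 ≤ p x) (hp : Integrable p)
    (h1 : Integrable fun x => ‖x‖ * p x) (l : EuclideanSpace ℝ (Fin n) →L[ℝ] ℝ) :
    Integrable fun x => l x * p x := by
  refine (h1.const_mul ‖l‖).mono' (l.continuous.aestronglyMeasurable.mul hp.aestronglyMeasurable)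
    (ae_of_all _ fun x => ?_)
  rw [norm_mul, norm_of_nonneg (hp0 x), ← mul_assoc]
  exact mul_le_mul_of_nonneg_right (l.le_opNorm x) (hp0 x)

theorem integrable_clm_sq_mul (hp0 : ∀ x, 0 ≤ p x) (hp : Integrable p)
    (h2 : Integrable fun x => ‖x‖ ^ 2 * p x) (l : EuclideanSpace ℝ (Fin n) →L[ℝ] ℝ) :
    Integrable fun x => l x ^ 2 * p x := by
  refine (h2.const_mul (‖l‖ ^ 2)).mono'
    ((l.continuous.pow 2).aestronglyMeasurable.mul hp.aestronglyMeasurable)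
    (ae_of_all _ fun x => ?_)
  rw [norm_mul, norm_of_nonneg (hp0 x), ← mul_assoc, norm_pow, ← mul_pow]
  gcongr
  · exact hp0 x
  · exact l.le_opNorm x

theorem integral_clm_mul_eq_zero (hp : Integrable p) (h1 : Integrable fun x => ‖x‖ * p x)
    (hp0 : ∀ x, 0 ≤ p x) (hmean : densMean n p = 0) (l : EuclideanSpace ℝ (Fin n) →L[ℝ] ℝ) :
    ∫ x, l x * p x = 0 := by
  have hint : Integrable fun x => p x • x := by
    refine h1.mono' (hp.aestronglyMeasurable.smul continuous_id.aestronglyMeasurable)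
      (ae_of_all _ fun x => ?_)
    rw [norm_smul, norm_of_nonneg (hp0 x), mul_comm]
  have h := l.integral_comp_comm hint
  rw [show ∫ x, p x • x = 0 from hmean, map_zero] at h
  simpa [mul_comm] using h

theorem integral_clm_sq_mul (hp0 : ∀ x, 0 ≤ p x) (hp : Integrable p) (hmean : densMean n p = 0)
    (hcov : densCov n p = 1) (l : EuclideanSpace ℝ (Fin n) →L[ℝ] ℝ) :
    ∫ x, l x ^ 2 * p x = ‖l‖ ^ 2 := by
  obtain ⟨v, rfl⟩ := (InnerProductSpace.toDual ℝ (EuclideanSpace ℝ (Fin n))).surjective l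
  have hint (i j : Fin n) : Integrable fun x => v i * v j * (p x * (x i * x j)) := by
    refine Integrable.const_mul ?_ _
    refine ((integrable_sq_mul_of_densCov_eq_one hmean hcov i).add
      (integrable_sq_mul_of_densCov_eq_one hmean hcov j)).mono'
      (hp.aestronglyMeasurable.mul (Continuous.aestronglyMeasurable (by fun_prop)))
      (ae_of_all _ fun x => ?_)
    rw [norm_mul, norm_of_nonneg (hp0 x), Pi.add_apply, ← mul_add]
    refine mul_le_mul_of_nonneg_left ?_ (hp0 x)
    rw [Real.norm_eq_abs, abs_le]
    constructor <;> nlinarith [sq_nonneg (x i + x j), sq_nonneg (x i - x j)]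
  have hcov' (i j : Fin n) : ∫ x, p x * (x i * x j) = (1 : Matrix (Fin n) (Fin n) ℝ) i j := by
    rw [← hcov]
    simp [densCov, hmean]
  calc ∫ x, (InnerProductSpace.toDual ℝ (EuclideanSpace ℝ (Fin n)) v) x ^ 2 * p x
      = ∫ x, ∑ i, ∑ j, v i * v j * (p x * (x i * x j)) := by
        refine integral_congr_ae (ae_of_all _ fun x => ?_)
        simp only [InnerProductSpace.toDual_apply_apply, PiLp.inner_apply, sq, Finset.sum_mul,
          Finset.mul_sum, RCLike.inner_apply, conj_trivial]
        exact Finset.sum_congr rfl fun i _ => Finset.sum_congr rfl fun j _ => by ring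
    _ = ∑ i, ∑ j, v i * v j * (1 : Matrix (Fin n) (Fin n) ℝ) i j := by
        rw [integral_finsetSum _ fun i _ => integrable_finsetSum _ fun j _ => hint i j]
        refine Finset.sum_congr rfl fun i _ => ?_
        rw [integral_finsetSum _ fun j _ => hint i j]
        refine Finset.sum_congr rfl fun j _ => ?_
        rw [integral_const_mul, hcov']
    _ = ‖InnerProductSpace.toDual ℝ (EuclideanSpace ℝ (Fin n)) v‖ ^ 2 := by
        rw [LinearIsometryEquiv.norm_map, EuclideanSpace.real_norm_sq_eq]
        simp [Matrix.one_apply, sq]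

/-- An isotropic approximately log-concave density puts a definite amount of mass on the positive
part of every linear functional. -/
theorem ApproxLogConcave.norm_mul_le_integral_max {ε : ℝ} (hε : 0 < ε) (hε2 : ε < 1 / 2)
    (hp0 : ∀ x, 0 ≤ p x) (hp : Integrable p) (hp1 : ∫ x, p x = 1) (hplc : ApproxLogConcave ε p)
    (hmean : densMean n p = 0) (hcov : densCov n p = 1)
    (l : EuclideanSpace ℝ (Fin n) →L[ℝ] ℝ) :
    ‖l‖ * (ε / 80) ≤ ∫ x, max (l x) 0 * p x := by
  have h2 := integrable_norm_sq_mul_of_densCov_eq_one hmean hcov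
  have h1 := integrable_norm_mul_of_integrable_norm_sq_mul hp0 hp h2
  rcases eq_or_ne l 0 with rfl | hl
  · simp
  have hl0 : 0 < ‖l‖ := norm_pos_iff.2 hl
  have habs (l : EuclideanSpace ℝ (Fin n) →L[ℝ] ℝ) : Integrable fun x => |l x| * p x := by
    refine (integrable_clm_mul hp0 hp h1 l).norm.congr (ae_of_all _ fun x => ?_)
    simp [abs_of_nonneg (hp0 x)]
  have hunit := ApproxLogConcave.le_integral_abs hε hε2 hp0 hp hp1 hplc (‖l‖⁻¹ • l)
    (habs _) (integrable_clm_sq_mul hp0 hp h2 _)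
    (by rw [integral_clm_sq_mul hp0 hp hmean hcov, norm_smul, norm_inv, norm_norm,
      inv_mul_cancel₀ hl0.ne', one_pow])
  have hscale : ∫ x, |(‖l‖⁻¹ • l) x| * p x = ‖l‖⁻¹ * ∫ x, |l x| * p x := by
    rw [← integral_const_mul]
    simp [abs_mul, mul_assoc]
  rw [hscale, le_inv_mul_iff₀ hl0] at hunit
  have hmax : ∫ x, max (l x) 0 * p x = (1 / 2) * ∫ x, |l x| * p x := by
    have : (fun x => max (l x) 0 * p x) = fun x => (1 / 2) * (|l x| * p x + l x * p x) := by
      funext x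
      rw [max_def, abs_eq_max_neg, max_def]
      split_ifs <;> linarith
    rw [this, integral_const_mul, integral_add (habs l) (integrable_clm_mul hp0 hp h1 l),
      integral_clm_mul_eq_zero hp h1 hp0 hmean, add_zero]
  rw [hmax]
  linarith

end Isotropic

section Domination

variable {E : Type*} [NormedAddCommGroup E] [NormedSpace ℝ E]

theorem ConvexOn.exists_affine_le_of_pos {φ : E → ℝ} (hφ : ConvexOn ℝ Set.univ φ)
    (hc : Continuous φ) (u : E) {η : ℝ} (hη : 0 < η) :
    ∃ (l : E →L[ℝ] ℝ) (k : ℝ), (∀ x, l x + k ≤ φ x) ∧ l u + k = φ u - η := by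
  obtain ⟨l, k, hle, heq⟩ := ConvexOn.exists_affine_le_of_lt (𝕜 := ℝ) (Set.mem_univ u)
    (sub_lt_self (φ u) hη) isClosed_univ (hc.lowerSemicontinuous.lowerSemicontinuousOn _) hφ
  exact ⟨l, k, fun x => hle ⟨x, Set.mem_univ x⟩, heq⟩

/-- If `ψ ≥ 0` is convex and nearly vanishes at the origin, its values on a small ball are
controlled by its integral against any density whose linear functionals have large positive
parts. -/
theorem ConvexOn.le_integral_mul_add [MeasurableSpace E] [BorelSpace E] {μ : Measure E}
    {p ψ : E → ℝ} {δ η : ℝ} (hη : 0 < η) (hp0 : ∀ x, 0 ≤ p x) (hp : Integrable p μ)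
    (hp1 : ∫ x, p x ∂μ = 1) (hl : ∀ l : E →L[ℝ] ℝ, Integrable (fun x => max (l x) 0 * p x) μ)
    (hδ : ∀ l : E →L[ℝ] ℝ, ‖l‖ * δ ≤ ∫ x, max (l x) 0 * p x ∂μ)
    (hψ : ConvexOn ℝ Set.univ ψ) (hc : Continuous ψ) (hψ0 : ∀ x, 0 ≤ ψ x) (hψη : ψ 0 ≤ η)
    (hint : Integrable (fun x => ψ x * p x) μ) {u : E} (hu : ‖u‖ ≤ δ) :
    ψ u ≤ ∫ x, ψ x * p x ∂μ + 2 * η := by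
  obtain ⟨l, k, hle, heq⟩ := hψ.exists_affine_le_of_pos hc u hη
  have hk : k ≤ η := by simpa using (hle 0).trans hψη
  have hmono : ∫ x, (max (l x) 0 * p x + (k - η) * p x) ∂μ ≤ ∫ x, ψ x * p x ∂μ := by
    refine integral_mono ((hl l).add (hp.const_mul _)) hint fun x => ?_
    simp only [← add_mul]
    refine mul_le_mul_of_nonneg_right ?_ (hp0 x)
    rcases max_cases (l x) 0 with ⟨h, -⟩ | ⟨h, -⟩ <;> rw [h]
    · linarith [hle x]
    · linarith [hψ0 x]
  rw [integral_add (hl l) (hp.const_mul _), integral_const_mul, hp1, mul_one] at hmono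
  have hlu : l u ≤ ‖l‖ * δ :=
    (le_abs_self _).trans ((l.le_opNorm u).trans (mul_le_mul_of_nonneg_left hu (norm_nonneg l)))
  linarith [hδ l]

end Domination

/-- **Lemma (convex domination).** An isotropic `ε`-approximately log-concave density `p`
convexly dominates every centered probability measure supported in the ball of radius `ε/80`. -/
theorem convex_domination
    (n : ℕ) (ε : ℝ) (hε : ε ∈ Set.Ioo (0 : ℝ) (1 / 2))
    (p : EuclideanSpace ℝ (Fin n) → ℝ) (hp0 : ∀ x, 0 ≤ p x) (hp1 : ∫ x, p x = 1)
    (hplc : ApproxLogConcave ε p)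
    (hmean : densMean n p = 0) (hcov : densCov n p = 1)
    (r : Measure (EuclideanSpace ℝ (Fin n))) [IsProbabilityMeasure r]
    (hrmean : ∫ x, x ∂r = 0)
    (hrsupp : r (Metric.closedBall 0 (ε / 80))ᶜ = 0)
    (φ : EuclideanSpace ℝ (Fin n) → ℝ) (hφ : ConvexOn ℝ Set.univ φ)
    (hφint : Integrable (fun x => φ x * p x)) :
    ∫ x, φ x ∂r ≤ ∫ x, φ x * p x := by
  have hp : Integrable p := Integrable.of_integral_ne_zero (by rw [hp1]; exact one_ne_zero)
  have h2 := integrable_norm_sq_mul_of_densCov_eq_one hmean hcov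
  have h1 := integrable_norm_mul_of_integrable_norm_sq_mul hp0 hp h2
  have hφc : Continuous φ := continuousOn_univ.1 (hφ.continuousOn isOpen_univ)
  have hball : ∀ᵐ x ∂r, x ∈ Metric.closedBall (0 : EuclideanSpace ℝ (Fin n)) (ε / 80) :=
    mem_ae_iff.2 hrsupp
  have hcompact : IsCompact (Metric.closedBall (0 : EuclideanSpace ℝ (Fin n)) (ε / 80)) :=
    isCompact_closedBall _ _
  have hrint {F : Type} [NormedAddCommGroup F] {f : EuclideanSpace ℝ (Fin n) → F}
      (hf : Continuous f) : Integrable f r := by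
    have h := hf.continuousOn.integrableOn_compact (μ := r) hcompact
    rwa [IntegrableOn, Measure.restrict_eq_self_of_ae_mem hball] at h
  refine le_of_forall_pos_le_add fun η hη => ?_
  obtain ⟨l, k, hle, heq⟩ := hφ.exists_affine_le_of_pos hφc 0 (half_pos hη)
  have hψ : ConvexOn ℝ Set.univ fun x => φ x - (l x + k) :=
    hφ.sub ((l.toLinearMap.concaveOn convex_univ).add_const k)
  have hlint := integrable_clm_mul hp0 hp h1 l
  have hψint : Integrable fun x => (φ x - (l x + k)) * p x :=
    (hφint.sub (hlint.add (hp.const_mul k))).congr (ae_of_all _ fun x => by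
      simp only [Pi.sub_apply, Pi.add_apply]; ring)
  have hψp : ∫ x, (φ x - (l x + k)) * p x = (∫ x, φ x * p x) - k := by
    calc ∫ x, (φ x - (l x + k)) * p x = ∫ x, (φ x * p x - (l x * p x + k * p x)) :=
          integral_congr_ae (ae_of_all _ fun x => by ring)
      _ = _ := by
        rw [integral_sub hφint (hlint.fun_add (hp.const_mul k)), integral_add hlint (hp.const_mul k),
          integral_clm_mul_eq_zero hp h1 hp0 hmean, integral_const_mul, hp1, zero_add, mul_one]
  have hψr : ∫ x, (φ x - (l x + k)) ∂r = (∫ x, φ x ∂r) - k := by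
    rw [integral_sub (hrint hφc) (hrint (by fun_prop)), integral_add (hrint (by fun_prop))
      (hrint (by fun_prop)), l.integral_comp_comm (hrint (f := fun x => x) continuous_id), hrmean, map_zero]
    simp
  have hbound : ∀ᵐ x ∂r, φ x - (l x + k) ≤ (∫ x, (φ x - (l x + k)) * p x) + 2 * (η / 2) := by
    filter_upwards [hball] with u hu
    refine ConvexOn.le_integral_mul_add (half_pos hη) hp0 hp hp1 (fun l => ?_)
      (fun l => hplc.norm_mul_le_integral_max hε.1 hε.2 hp0 hp hp1 hmean hcov l) hψ (by fun_prop)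
      (fun x => sub_nonneg.2 (hle x)) (by linarith) hψint (mem_closedBall_zero_iff.1 hu)
    refine (integrable_clm_mul hp0 hp h1 l).pos_part.congr (ae_of_all _ fun x => ?_)
    simp [max_mul_of_nonneg _ _ (hp0 x)]
  have hfinal := integral_mono_ae (hrint (by fun_prop)) (integrable_const _) hbound
  rw [hψr, hψp, integral_const, probReal_univ, one_smul] at hfinal
  linarith
end
end
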